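/- There exists an absolute constant C⋆ > 0 such that for every odd prime p, every multiplicative subgroup Γ of F_p^* (viewed as a subset of F_p), and every integer k ≥ 1, one has 0 ≤ T⁺_{2^k}(Γ) − |Γ|^{2^{k+1}}/p and T⁺_{2^k}(Γ) − |Γ|^{2^{k+1}}/p ≤ 2^{3k²}·(C⋆·(log p)⁴)^{k−1} · |Γ|^{2^{k+1} − (k+7)/2} · T⁺₂(Γ). -/

import Mathlib

open Finset

/-- `Tplus p k A` is the number of `2k`-tuples `(a₁,…,a_k,a₁',…,a_k') ∈ A^{2k}`
with `a₁+⋯+a_k = a₁'+⋯+a_k'`. -/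
def Tplus (p k : ℕ) (A : Finset (ZMod p)) : ℕ :=
  (((Fintype.piFinset fun _ : Fin k => A) ×ˢ (Fintype.piFinset fun _ : Fin k => A)).filter
    fun a => ∑ i, a.1 i = ∑ i, a.2 i).card

/-!
Let `r` count the representations of an element of `F_p` as a sum of `n` elements of `Γ`, and let
`M = |Γ| ^ n` be its total mass. Then `T⁺_n(Γ) = ∑ r ^ 2`, while `T⁺_{2n}(Γ)` is the additive
energy `E(r)` of the weight `r`, and the theorem follows by iterating the inequality
`(E(r) - M ^ 4 / p) √|Γ| ≪ (log p) ^ 4 M ^ 2 (∑ r ^ 2 - M ^ 2 / p)`.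

If `r` is close to uniform, this inequality comes from a second moment over all dilates of `r`,
because `r` is invariant under multiplication by `Γ`. Otherwise `r` is cut into dyadic levels. Each
level is supported on a `Γ`-invariant set `P`, and it suffices to see that the additive energy of
`P` is `≪ |P| ^ 3 / √|Γ|` as long as `|P| √|Γ| ≤ p`. A solution of `x₁ + y₁ = x₂ + y₂` in `P`
together with two elements of `Γ` gives a pair of meeting lines from two families of `|P| ^ 2 |Γ|`
lines in 3-space, so this is an incidence bound.

Incidences are counted by the polynomial method. If there are too many, a surface of degree less
than `p` contains the lines that meet many others. An irreducible component of it either contains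
few lines, since its inflection polynomial is not a multiple of its equation, or is ruled by lines
that almost all meet every line of the other family. In the second case nearly all pairs of its
lines meet, which is impossible for many lines, since two lines of one family have few common
neighbours in the other.
-/

noncomputable section

open MvPolynomial
open scoped Polynomial

section PolynomialPreliminaries

variable {R A σ : Type*} [CommRing R] [CommRing A] [Algebra R A]

lemma derivation_aeval_eq_sum_pderiv {M : Type*} [AddCommGroup M] [Module A M] [Module R M]
    [Fintype σ] (D : Derivation R A M) (x : σ → A) (f : MvPolynomial σ R) :
    D (aeval x f) = ∑ i, aeval x (pderiv i f) • D (x i) := by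
  classical
  induction f using MvPolynomial.induction_on with
  | C a => simp
  | add f g hf hg => simp [hf, hg, sum_add_distrib, add_smul]
  | mul_X f j hf =>
    simp [hf, pderiv_X, Pi.single_apply, add_smul, sum_add_distrib, smul_sum, mul_smul,
      ite_smul, apply_ite (aeval x)]

lemma eval_aeval_polynomial (v : σ → A[X]) (f : MvPolynomial σ R) (t : A) :
    (aeval v f).eval t = aeval (fun i => (v i).eval t) f := by
  simpa using! comp_aeval_apply v ((Polynomial.aeval t).restrictScalars R) f

lemma eval_aeval_X (c : R[X]) (v : σ → R) (i : σ) :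
    eval v (Polynomial.aeval (X i) c) = c.eval (v i) := by
  rw [← aeval_eq_eval, ← Polynomial.aeval_algHom_apply, aeval_X, Polynomial.coe_aeval_eq_eval]

lemma natDegree_aeval_le_totalDegree {v : σ → A[X]} (hv : ∀ i, (v i).natDegree ≤ 1)
    (f : MvPolynomial σ R) : (aeval v f).natDegree ≤ f.totalDegree := by
  have hmap : (map (algebraMap R A) f).totalDegree ≤ f.totalDegree :=
    Finset.sup_mono (support_map_subset _ _)
  simpa [aeval_map_algebraMap] using aeval_natDegree_le _ hmap v hv

lemma aeval_eq_zero_of_totalDegree_lt_card [IsDomain A] {ι : Type*} {v : σ → A[X]}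
    (hv : ∀ i, (v i).natDegree ≤ 1) {f : MvPolynomial σ R} {S : Finset ι} {t : ι → A}
    (ht : Set.InjOn t S) (hS : f.totalDegree < #S)
    (hf : ∀ s ∈ S, (aeval v f).eval (t s) = 0) : aeval v f = 0 := by
  classical
  refine Polynomial.eq_zero_of_natDegree_lt_card_of_eval_eq_zero' _ (S.image t) (by simpa) ?_
  rw [card_image_of_injOn ht]
  exact (natDegree_aeval_le_totalDegree hv f).trans_lt hS

lemma totalDegree_pderiv_le (i : σ) (f : MvPolynomial σ R) :
    (pderiv i f).totalDegree ≤ f.totalDegree - 1 := by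
  refine Finset.sup_le fun m hm => ?_
  have hmem : m + Finsupp.single i 1 ∈ f.support := by
    rw [mem_support_iff, coeff_pderiv] at hm
    exact mem_support_iff.2 (left_ne_zero_of_mul hm)
  have hle := le_totalDegree hmem
  rw [Finsupp.sum_add_index' (by simp) (by simp), Finsupp.sum_single_index rfl] at hle
  omega

lemma pderiv_eq_zero_of_dvd_pderiv [IsDomain R] {g : MvPolynomial σ R} (i : σ)
    (hdeg : 0 < g.totalDegree) (h : g ∣ pderiv i g) : pderiv i g = 0 := by
  by_contra hne
  obtain ⟨q, hq⟩ := h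
  have hg : g ≠ 0 := by rintro rfl; simp at hdeg
  have hq0 : q ≠ 0 := by rintro rfl; simp [hq] at hne
  have hmul := totalDegree_mul_of_isDomain hg hq0
  rw [← hq] at hmul
  have := totalDegree_pderiv_le i g
  omega

lemma totalDegree_pos_of_irreducible {K : Type*} [Field K] {g : MvPolynomial σ K}
    (hg : Irreducible g) : 0 < g.totalDegree := by
  rw [pos_iff_ne_zero]
  intro h0
  have hC := totalDegree_eq_zero_iff_eq_C.1 h0
  have hne : coeff 0 g ≠ 0 := fun h => hg.ne_zero (by rw [hC, h, C_0])
  exact hg.not_isUnit (hC ▸ hne.isUnit.map C)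

lemma polynomial_eq_C_of_derivative_eq_zero [IsDomain R] {p : ℕ} [CharP R p] {f : R[X]}
    (hf : f.natDegree < p) (h : Polynomial.derivative f = 0) : f = Polynomial.C (f.coeff 0) := by
  ext n
  cases n with
  | zero => simp
  | succ n =>
    rw [Polynomial.coeff_C_succ]
    by_cases hn : n + 1 < p
    · have hcoeff : f.coeff (n + 1) * ((n + 1 : ℕ) : R) = 0 := by
        simpa [Polynomial.coeff_derivative] using congrArg (Polynomial.coeff · n) h
      refine (mul_eq_zero.1 hcoeff).resolve_right fun hz => ?_
      rw [CharP.cast_eq_zero_iff R p] at hz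
      exact absurd (Nat.le_of_dvd n.succ_pos hz) (by omega)
    · exact Polynomial.coeff_eq_zero_of_natDegree_lt (by omega)

lemma aeval_update_eq_of_pderiv_eq_zero [IsDomain A] [Finite σ] [DecidableEq σ] {p : ℕ}
    [CharP A p] {g : MvPolynomial σ R} (hp : g.totalDegree < p) {i : σ} (h : pderiv i g = 0)
    (P : σ → A) (z : A) : aeval (Function.update P i z) g = aeval P g := by
  cases nonempty_fintype σ
  set v : σ → A[X] := Function.update (fun j => Polynomial.C (P j)) i Polynomial.X with hv
  have heval (z : A) : aeval (Function.update P i z) g = (aeval v g).eval z := by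
    rw [eval_aeval_polynomial]
    congr 2
    funext j
    by_cases hj : j = i <;> simp [hv, hj]
  have hvdeg (j : σ) : (v j).natDegree ≤ 1 := by
    by_cases hj : j = i <;> simp [hv, hj]
  have hderiv : Polynomial.derivative (aeval v g) = 0 := by
    refine (derivation_aeval_eq_sum_pderiv (Polynomial.derivative'.restrictScalars R) v g).trans
      (sum_eq_zero fun j _ => ?_)
    by_cases hj : j = i <;> simp [hv, hj, h]
  have hconst := polynomial_eq_C_of_derivative_eq_zero
    ((natDegree_aeval_le_totalDegree hvdeg g).trans_lt hp) hderiv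
  calc aeval (Function.update P i z) g = aeval (Function.update P i (P i)) g := by
        rw [heval, heval, hconst, Polynomial.eval_C, Polynomial.eval_C]
    _ = aeval P g := by rw [Function.update_eq_self]

end PolynomialPreliminaries

section PlaneSections

variable {K : Type*} [Field K]

/-- The derivation acting on a polynomial coefficientwise, killing the variable. -/
def coeffDerivation {R : Type*} [CommRing R] [Algebra K R] (D : Derivation K R R) :
    Derivation K R[X] R[X] :=
  (PolynomialModule.equivPolynomialSelf (R := R)).toLinearMap.compDer D.mapCoeffs

lemma coeff_coeffDerivation {R : Type*} [CommRing R] [Algebra K R] (D : Derivation K R R)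
    (f : R[X]) (n : ℕ) : (coeffDerivation D f).coeff n = D (f.coeff n) :=
  rfl

lemma coeffDerivation_C {R : Type*} [CommRing R] [Algebra K R] (D : Derivation K R R) (a : R) :
    coeffDerivation D (Polynomial.C a) = Polynomial.C (D a) := by
  ext n
  rw [coeff_coeffDerivation, Polynomial.coeff_C, Polynomial.coeff_C]
  split <;> simp

lemma coeffDerivation_X {R : Type*} [CommRing R] [Algebra K R] (D : Derivation K R R) :
    coeffDerivation D Polynomial.X = 0 := by
  ext n
  rw [coeff_coeffDerivation, Polynomial.coeff_X]
  split <;> simp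

variable (g : MvPolynomial (Fin 3) K)

/-- The derivation along the tangent direction of the curves cut out of the level surfaces of `g`
by the planes on which the coordinate `1` is constant. -/
def sectionTangent : Derivation K (MvPolynomial (Fin 3) K) (MvPolynomial (Fin 3) K) :=
  pderiv 0 g • pderiv 2 - pderiv 2 g • pderiv 0

lemma sectionTangent_apply (f : MvPolynomial (Fin 3) K) :
    sectionTangent g f = pderiv 0 g * pderiv 2 f - pderiv 2 g * pderiv 0 f := by
  simp [sectionTangent]

lemma sectionTangent_self : sectionTangent g g = 0 := by
  rw [sectionTangent_apply]
  ring

/-- The polynomial that vanishes at the inflection points of the plane sections of `g = 0` on which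
the coordinate `1` is constant: the numerator of the derivative of the slope of the tangent along
the section. -/
def inflection : MvPolynomial (Fin 3) K :=
  pderiv 0 g * sectionTangent g (pderiv 2 g) - pderiv 2 g * sectionTangent g (pderiv 0 g)

lemma totalDegree_sectionTangent_le {f : MvPolynomial (Fin 3) K}
    (hf : f.totalDegree ≤ g.totalDegree) :
    (sectionTangent g f).totalDegree ≤ 2 * g.totalDegree := by
  rw [sectionTangent_apply]
  refine (totalDegree_sub _ _).trans (max_le ?_ ?_) <;> refine (totalDegree_mul _ _).trans ?_
  · have := totalDegree_pderiv_le 0 g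
    have := totalDegree_pderiv_le 2 f
    omega
  · have := totalDegree_pderiv_le 2 g
    have := totalDegree_pderiv_le 0 f
    omega

lemma totalDegree_inflection_le : (inflection g).totalDegree ≤ 3 * g.totalDegree := by
  have hpderiv (i : Fin 3) : (pderiv i g).totalDegree ≤ g.totalDegree :=
    (totalDegree_pderiv_le i g).trans (Nat.sub_le _ _)
  have htangent (i : Fin 3) := totalDegree_sectionTangent_le g (hpderiv i)
  refine (totalDegree_sub _ _).trans (max_le ?_ ?_) <;> refine (totalDegree_mul _ _).trans ?_
  · have := hpderiv 0
    have := htangent 2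
    omega
  · have := hpderiv 2
    have := htangent 0
    omega

/-- The tangent line to the plane section through a generic point, as a polynomial in the
parameter along the line whose coefficients are polynomials in the coordinates of the point. -/
def sectionTangentLine : Fin 3 → (MvPolynomial (Fin 3) K)[X] :=
  ![Polynomial.C (X 0) - Polynomial.C (pderiv 2 g) * Polynomial.X, Polynomial.C (X 1),
    Polynomial.C (X 2) + Polynomial.C (pderiv 0 g) * Polynomial.X]

lemma natDegree_sectionTangentLine_le (i : Fin 3) :
    (sectionTangentLine g i).natDegree ≤ 1 := by
  fin_cases i <;> dsimp [sectionTangentLine] <;> compute_degree!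

lemma coeff_zero_aeval_sectionTangentLine : (aeval (sectionTangentLine g) g).coeff 0 = g := by
  have hbase : (fun i => (sectionTangentLine g i).eval 0) = X := by
    funext i
    fin_cases i <;> simp [sectionTangentLine]
  rw [Polynomial.coeff_zero_eq_eval_zero, eval_aeval_polynomial, hbase, aeval_X_left_apply]

/- Moving the base point along the section and moving along its tangent line differ only by the
turning of the tangent, which is measured by `inflection g`. -/
lemma sectionTangentLine_transport :
    (Polynomial.C (pderiv 0 g) + Polynomial.X * Polynomial.C (sectionTangent g (pderiv 0 g))) *
        Polynomial.derivative (aeval (sectionTangentLine g) g) =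
      Polynomial.C (pderiv 0 g) * coeffDerivation (sectionTangent g)
          (aeval (sectionTangentLine g) g) +
        Polynomial.X * (Polynomial.C (inflection g) *
          aeval (sectionTangentLine g) (pderiv 0 g)) := by
  have hparam : Polynomial.derivative (aeval (sectionTangentLine g) g) =
      aeval (sectionTangentLine g) (pderiv 2 g) * Polynomial.C (pderiv 0 g) -
        aeval (sectionTangentLine g) (pderiv 0 g) * Polynomial.C (pderiv 2 g) := by
    have h := derivation_aeval_eq_sum_pderiv
      ((Polynomial.derivative' (R := MvPolynomial (Fin 3) K)).restrictScalars K)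
      (sectionTangentLine g) g
    refine h.trans ?_
    simp only [sectionTangentLine, Derivation.restrictScalars_apply, Polynomial.derivative'_apply,
      smul_eq_mul, Fin.sum_univ_three, Matrix.cons_val, Polynomial.derivative_sub,
      Polynomial.derivative_add, Polynomial.derivative_C, Polynomial.derivative_mul,
      Polynomial.derivative_X]
    ring
  have hbase : coeffDerivation (sectionTangent g) (aeval (sectionTangentLine g) g) =
      aeval (sectionTangentLine g) (pderiv 2 g) * (Polynomial.C (pderiv 0 g) +
          Polynomial.C (sectionTangent g (pderiv 0 g)) * Polynomial.X) -
        aeval (sectionTangentLine g) (pderiv 0 g) * (Polynomial.C (pderiv 2 g) +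
          Polynomial.C (sectionTangent g (pderiv 2 g)) * Polynomial.X) := by
    have hX0 : sectionTangent g (X 0) = -pderiv 2 g := by simp [sectionTangent_apply]
    have hX1 : sectionTangent g (X 1) = 0 := by simp [sectionTangent_apply]
    have hX2 : sectionTangent g (X 2) = pderiv 0 g := by simp [sectionTangent_apply]
    rw [derivation_aeval_eq_sum_pderiv]
    simp only [sectionTangentLine, smul_eq_mul, Fin.sum_univ_three, Matrix.cons_val, map_sub,
      map_add, map_neg, map_zero, Derivation.leibniz, coeffDerivation_C, coeffDerivation_X, hX0,
      hX1, hX2]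
    ring
  rw [hparam, hbase, inflection, Polynomial.C_sub, Polynomial.C_mul, Polynomial.C_mul]
  ring

variable {g}

lemma not_dvd_natCast_of_prime {σ : Type*} {p : ℕ} [CharP K p] {q : MvPolynomial σ K}
    (hq : Prime q) {n : ℕ} (hn0 : 0 < n) (hn : n < p) : ¬q ∣ (n : MvPolynomial σ K) := by
  have hcast : (n : K) ≠ 0 := by
    rw [Ne, CharP.cast_eq_zero_iff K p]
    exact Nat.not_dvd_of_pos_of_lt hn0 hn
  intro hdvd
  rw [← map_natCast (C : K →+* MvPolynomial σ K)] at hdvd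
  exact hq.not_isUnit (isUnit_of_dvd_unit hdvd (hcast.isUnit.map C))

lemma dvd_coeff_aeval_sectionTangentLine {p : ℕ} [CharP K p] (hg : Prime g)
    (hinfl : g ∣ inflection g) (hU : ¬g ∣ pderiv 0 g) {n : ℕ} (hn : n < p) :
    g ∣ (aeval (sectionTangentLine g) g).coeff n := by
  induction n with
  | zero => rw [coeff_zero_aeval_sectionTangentLine]
  | succ n ih =>
    set Φ := aeval (sectionTangentLine g) g with hΦ
    have hdvd : g ∣ Φ.coeff n := ih (by omega)
    have htransport := congrArg (Polynomial.coeff · n) (sectionTangentLine_transport g)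
    simp only [add_mul, Polynomial.coeff_add, Polynomial.coeff_C_mul, mul_assoc,
      coeff_coeffDerivation, Polynomial.coeff_derivative, ← hΦ] at htransport
    have hbase : g ∣ sectionTangent g (Φ.coeff n) := by
      obtain ⟨c, hc⟩ := hdvd
      simp [hc, Derivation.leibniz, sectionTangent_self]
    have hturn : g ∣ (Polynomial.X * (Polynomial.C (inflection g) *
        aeval (sectionTangentLine g) (pderiv 0 g))).coeff n := by
      cases n with
      | zero => simp
      | succ n => simpa using hinfl.mul_right _
    have hlower : g ∣ (Polynomial.X * (Polynomial.C (sectionTangent g (pderiv 0 g)) *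
        Polynomial.derivative Φ)).coeff n := by
      cases n with
      | zero => simp
      | succ n =>
        simpa [Polynomial.coeff_derivative] using (hdvd.mul_right _).mul_left _
    have hstep : g ∣ pderiv 0 g * (Φ.coeff (n + 1) * ((n : MvPolynomial (Fin 3) K) + 1)) := by
      rw [eq_sub_of_add_eq htransport]
      exact dvd_sub (dvd_add (hbase.mul_left _) hturn) hlower
    refine (hg.dvd_or_dvd ((hg.dvd_or_dvd hstep).resolve_left hU)).resolve_right ?_
    exact_mod_cast not_dvd_natCast_of_prime hg n.succ_pos hn

/- A surface all of whose plane sections consist of inflection points is ruled by the tangents to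
these sections; small degree stands in for characteristic zero. -/
lemma eval_sectionTangentLine_eq_zero {p : ℕ} [CharP K p] (hp : g.totalDegree < p) (hg : Prime g)
    (hinfl : g ∣ inflection g) (hU : ¬g ∣ pderiv 0 g) {P : Fin 3 → K} (hP : eval P g = 0)
    (t : K) :
    eval ![P 0 - t * eval P (pderiv 2 g), P 1, P 2 + t * eval P (pderiv 0 g)] g = 0 := by
  set Φ := aeval (sectionTangentLine g) g with hΦ
  have hdeg : Φ.natDegree < p :=
    (natDegree_aeval_le_totalDegree (natDegree_sectionTangentLine_le g) g).trans_lt hp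
  have hzero : Φ.map (eval P) = 0 := by
    ext n
    rw [Polynomial.coeff_map, Polynomial.coeff_zero]
    by_cases hn : n < p
    · obtain ⟨c, hc⟩ := dvd_coeff_aeval_sectionTangentLine hg hinfl hU hn
      rw [hΦ, hc, map_mul, hP, zero_mul]
    · rw [Polynomial.coeff_eq_zero_of_natDegree_lt (by omega), map_zero]
  have hline : Φ.map (eval P) = aeval (fun i => (sectionTangentLine g i).map (eval P)) g := by
    simpa [aeval_eq_eval] using!
      comp_aeval_apply (sectionTangentLine g) (Polynomial.mapAlgHom (aeval P)) g
  have hpoint := eval_aeval_polynomial (fun i => (sectionTangentLine g i).map (eval P)) g t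
  rw [← hline, hzero, Polynomial.eval_zero, aeval_eq_eval] at hpoint
  rw [hpoint]
  congr 2
  funext i
  fin_cases i <;> simp [sectionTangentLine, mul_comm t]

end PlaneSections

section Elimination

variable {K : Type*} [Field K]

lemma totalDegree_coeff_finSuccEquiv_le {R : Type*} [CommSemiring R] {n : ℕ}
    (f : MvPolynomial (Fin (n + 1)) R) (i : ℕ) :
    ((finSuccEquiv R n f).coeff i).totalDegree ≤ f.totalDegree := by
  by_cases h : (finSuccEquiv R n f).coeff i = 0
  · simp [h]
  · exact le_of_add_le_left (totalDegree_coeff_finSuccEquiv_add_le f i h)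

lemma totalDegree_det_le_sum {R σ n : Type*} [CommRing R] [Fintype n] [DecidableEq n]
    (M : Matrix n n (MvPolynomial σ R)) {d : n → ℕ} (hM : ∀ i j, (M i j).totalDegree ≤ d j) :
    M.det.totalDegree ≤ ∑ j, d j := by
  rw [Matrix.det_apply]
  refine totalDegree_finsetSum_le fun τ _ => (totalDegree_smul_le _ _).trans ?_
  exact (totalDegree_finsetProd _ _).trans (sum_le_sum fun j _ => hM _ j)

lemma totalDegree_resultant_finSuccEquiv_le {R : Type*} [CommRing R] {n : ℕ}
    (g h : MvPolynomial (Fin (n + 1)) R) :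
    ((finSuccEquiv R n g).resultant (finSuccEquiv R n h)).totalDegree ≤
      2 * g.totalDegree * h.totalDegree := by
  set G := finSuccEquiv R n g
  set H := finSuccEquiv R n h
  have hG : G.natDegree ≤ g.totalDegree :=
    (natDegree_finSuccEquiv g).trans_le (degreeOf_le_totalDegree _ _)
  have hH : H.natDegree ≤ h.totalDegree :=
    (natDegree_finSuccEquiv h).trans_le (degreeOf_le_totalDegree _ _)
  have hentry : ∀ i j, (Polynomial.sylvester G H G.natDegree H.natDegree i j).totalDegree ≤
      Fin.addCases (fun _ => h.totalDegree) (fun _ => g.totalDegree) j := by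
    intro i j
    induction j using Fin.addCases <;>
      simp only [Polynomial.sylvester, Matrix.of_apply, Fin.addCases_left, Fin.addCases_right] <;>
      split
    exacts [totalDegree_coeff_finSuccEquiv_le h _, by simp, totalDegree_coeff_finSuccEquiv_le g _,
      by simp]
  calc (G.resultant H).totalDegree
      ≤ G.natDegree * h.totalDegree + H.natDegree * g.totalDegree := by
        simpa [Polynomial.resultant, Fin.sum_univ_add] using totalDegree_det_le_sum _ hentry
    _ ≤ g.totalDegree * h.totalDegree + h.totalDegree * g.totalDegree := by gcongr
    _ = 2 * g.totalDegree * h.totalDegree := by ring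

lemma resultant_ne_zero_of_irreducible_of_not_dvd {S : Type*} [CommRing S] [IsDomain S]
    [UniqueFactorizationMonoid S] {G H : S[X]} (hG : Irreducible G) (h0 : G.natDegree ≠ 0)
    (hGH : ¬G ∣ H) : G.resultant H ≠ 0 := by
  have hprim := hG.isPrimitive h0
  have hinj := IsFractionRing.injective S (FractionRing S)
  have hcoprime : IsCoprime (G.map (algebraMap S (FractionRing S)))
      (H.map (algebraMap S (FractionRing S))) :=
    (hprim.irreducible_iff_irreducible_map_fraction_map.1 hG).coprime_iff_not_dvd.2
      fun hd => hGH (hprim.dvd_of_fraction_map_dvd_fraction_map hd)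
  have hres := Polynomial.resultant_ne_zero _ _ hcoprime
  rw [Polynomial.natDegree_map_eq_of_injective hinj, Polynomial.natDegree_map_eq_of_injective hinj,
    Polynomial.resultant_map_map] at hres
  exact fun h => hres (by rw [h, map_zero])

lemma finSuccEquiv_rename_succ {R : Type*} [CommSemiring R] {n : ℕ} (r : MvPolynomial (Fin n) R) :
    finSuccEquiv R n (rename Fin.succ r) = Polynomial.C r := by
  induction r using MvPolynomial.induction_on with
  | C a => simp [finSuccEquiv_apply]
  | add r s hr hs => simp only [map_add, hr, hs]
  | mul_X r i hr => simp only [map_mul, hr, rename_X, finSuccEquiv_X_succ]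

lemma rename_succ_mem_span_pair {R : Type*} [CommRing R] {n : ℕ} {r : MvPolynomial (Fin n) R}
    {g h : MvPolynomial (Fin (n + 1)) R} {a b : (MvPolynomial (Fin n) R)[X]}
    (hr : a * finSuccEquiv R n g + b * finSuccEquiv R n h = Polynomial.C r) :
    rename Fin.succ r ∈ Ideal.span {g, h} := by
  refine Ideal.mem_span_pair.2
    ⟨(finSuccEquiv R n).symm a, (finSuccEquiv R n).symm b, (finSuccEquiv R n).injective ?_⟩
  simp only [map_add, map_mul, AlgEquiv.apply_symm_apply, hr, finSuccEquiv_rename_succ]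

/- The witness is the resultant of `g` and `h` with respect to the eliminated variable. -/
lemma exists_rename_succ_mem_span_pair {n : ℕ} {g h : MvPolynomial (Fin (n + 1)) K} {b : ℕ}
    (hg : Irreducible g) (hgh : ¬g ∣ h) (hb : h.totalDegree ≤ b) (hb1 : 1 ≤ b) :
    ∃ r : MvPolynomial (Fin n) K, r ≠ 0 ∧ r.totalDegree ≤ 2 * g.totalDegree * b ∧
      rename Fin.succ r ∈ Ideal.span {g, h} := by
  set G := finSuccEquiv K n g
  set H := finSuccEquiv K n h
  have hGirr : Irreducible G := (MulEquiv.irreducible_iff (finSuccEquiv K n)).2 hg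
  have hGH : ¬G ∣ H := fun hd => hgh ((map_dvd_iff (finSuccEquiv K n)).1 hd)
  by_cases h0 : G.natDegree = 0
  · have hGC := Polynomial.eq_C_of_natDegree_eq_zero h0
    refine ⟨G.coeff 0, fun hzero => hGirr.ne_zero ?_, ?_,
      rename_succ_mem_span_pair (a := 1) (b := 0) (by simpa using hGC)⟩
    · rw [hGC, hzero, Polynomial.C_0]
    · exact (totalDegree_coeff_finSuccEquiv_le g 0).trans (by nlinarith)
  · obtain ⟨a, c, -, -, hac⟩ :=
      Polynomial.exists_mul_add_mul_eq_C_resultant G H le_rfl le_rfl (Or.inl h0)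
    refine ⟨G.resultant H, resultant_ne_zero_of_irreducible_of_not_dvd hGirr h0 hGH, ?_,
      rename_succ_mem_span_pair (a := a) (b := c) (by rw [← hac]; ring)⟩
    exact (totalDegree_resultant_finSuccEquiv_le g h).trans (by gcongr)

lemma card_le_totalDegree_of_aeval_update_eq_zero {R σ ι : Type*} [CommRing R] [IsDomain R]
    [DecidableEq σ] {f : MvPolynomial σ R} (hf : f ≠ 0) (i : σ) {S : Finset ι} {t : ι → R}
    (ht : Set.InjOn t S) (hS : ∀ s ∈ S, aeval (Function.update X i (C (t s))) f = 0) :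
    #S ≤ f.totalDegree := by
  set v : σ → (MvPolynomial σ R)[X] :=
    Function.update (fun j => Polynomial.C (X j)) i Polynomial.X
  have heval (a : MvPolynomial σ R) : (fun j => (v j).eval a) = Function.update X i a := by
    funext j
    rcases eq_or_ne j i with rfl | hji <;> simp [v, *]
  have hdeg (j : σ) : (v j).natDegree ≤ 1 := by
    rcases eq_or_ne j i with rfl | hji <;> simp [v, *]
  by_contra! hlt
  have hzero : aeval v f = 0 :=
    aeval_eq_zero_of_totalDegree_lt_card hdeg ((C_injective σ R).comp_injOn ht) hlt
      fun s hs => by rw [eval_aeval_polynomial, heval, Function.comp_apply, hS s hs]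
  have := eval_aeval_polynomial v f (X i)
  rw [hzero, heval, Function.update_eq_self, aeval_X_left_apply, Polynomial.eval_zero] at this
  exact hf this.symm

end Elimination

section Lines

variable {K : Type*} [Field K]

/-- For `q = (x, a, b)`, the line `t ↦ (b - a * t, x, t)` in the plane where the coordinate `1`
equals `x`. -/
def xLine (q : K × K × K) : Fin 3 → K[X] :=
  ![Polynomial.C q.2.2 - Polynomial.C q.2.1 * Polynomial.X, Polynomial.C q.1, Polynomial.X]

/-- For `q = (y, c, d)`, the line `t ↦ (c * t - d, t, y)` in the plane where the coordinate `2`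
equals `y`. -/
def yLine (q : K × K × K) : Fin 3 → K[X] :=
  ![Polynomial.C q.2.1 * Polynomial.X - Polynomial.C q.2.2, Polynomial.X, Polynomial.C q.1]

/-- The relation that `xLine q` and `yLine r` meet; their common point has coordinates `1` and `2`
equal to `q.1` and `r.1`. -/
def LinesMeet (q r : K × K × K) : Prop :=
  q.2.2 - q.2.1 * r.1 = r.2.1 * q.1 - r.2.2

instance [DecidableEq K] (q r : K × K × K) : Decidable (LinesMeet q r) :=
  decEq (q.2.2 - q.2.1 * r.1) (r.2.1 * q.1 - r.2.2)

lemma linesMeet_comm {q r : K × K × K} : LinesMeet q r ↔ LinesMeet r q := by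
  unfold LinesMeet
  constructor <;> intro h <;> linear_combination h

lemma LinesMeet.eval_xLine_eq {q r : K × K × K} (h : LinesMeet q r) :
    (fun i => (xLine q i).eval r.1) = fun i => (yLine r i).eval q.1 := by
  unfold LinesMeet at h
  funext i
  fin_cases i <;> simp [xLine, yLine, h]

lemma natDegree_xLine_le (q : K × K × K) (i : Fin 3) : (xLine q i).natDegree ≤ 1 := by
  fin_cases i <;> dsimp [xLine] <;> compute_degree!

lemma natDegree_yLine_le (q : K × K × K) (i : Fin 3) : (yLine q i).natDegree ≤ 1 := by
  fin_cases i <;> dsimp [yLine] <;> compute_degree!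

lemma LinesMeet.eval_aeval_xLine {q r : K × K × K} (h : LinesMeet q r)
    (f : MvPolynomial (Fin 3) K) : (aeval (xLine q) f).eval r.1 = (aeval (yLine r) f).eval q.1 := by
  rw [eval_aeval_polynomial, eval_aeval_polynomial, h.eval_xLine_eq]

lemma aeval_xLine_pderiv_eq {f : MvPolynomial (Fin 3) K} {q : K × K × K}
    (h : aeval (xLine q) f = 0) :
    aeval (xLine q) (pderiv 2 f) = Polynomial.C q.2.1 * aeval (xLine q) (pderiv 0 f) := by
  have hchain := derivation_aeval_eq_sum_pderiv (Polynomial.derivative' (R := K)) (xLine q) f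
  simp only [h, Fin.sum_univ_three, smul_eq_mul, map_zero] at hchain
  have hcoord : Polynomial.derivative' (xLine q 0) = -Polynomial.C q.2.1 ∧
      Polynomial.derivative' (xLine q 1) = 0 ∧ Polynomial.derivative' (xLine q 2) = 1 := by
    simp [xLine]
  rw [hcoord.1, hcoord.2.1, hcoord.2.2] at hchain
  linear_combination -hchain

/- A plane curve has an inflection at every point of a line that it contains. -/
lemma aeval_xLine_inflection_eq_zero {g : MvPolynomial (Fin 3) K} {q : K × K × K}
    (h : aeval (xLine q) g = 0) : aeval (xLine q) (inflection g) = 0 := by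
  have hfirst := aeval_xLine_pderiv_eq h
  have hsecond := aeval_xLine_pderiv_eq (f := pderiv 2 g - C q.2.1 * pderiv 0 g) (q := q)
    (by simp [hfirst, Polynomial.algebraMap_eq])
  simp only [map_sub, pderiv_mul, pderiv_C, zero_mul, zero_add, map_mul, algHom_C,
    Polynomial.algebraMap_eq] at hsecond
  simp only [inflection, sectionTangent_apply, map_sub, map_mul, hfirst]
  linear_combination (aeval (xLine q) (pderiv 0 g)) ^ 2 * hsecond

lemma card_le_of_aeval_line_eq_zero {ι : Type*} {g h : MvPolynomial (Fin 3) K} {b : ℕ}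
    (hg : Irreducible g) (hgh : ¬g ∣ h) (hb : h.totalDegree ≤ b) (hb1 : 1 ≤ b)
    {A : Finset ι} {t : ι → K} (ht : Set.InjOn t A) (i : Fin 2) {v : ι → Fin 3 → K[X]}
    (hv : ∀ q ∈ A, v q ∘ Fin.succ = Function.update (fun _ => Polynomial.X) i (Polynomial.C (t q)))
    (hgA : ∀ q ∈ A, aeval (v q) g = 0) (hhA : ∀ q ∈ A, aeval (v q) h = 0) :
    #A ≤ 2 * g.totalDegree * b := by
  obtain ⟨r, hr, hdeg, hmem⟩ := exists_rename_succ_mem_span_pair hg hgh hb hb1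
  obtain ⟨u, w, huw⟩ := Ideal.mem_span_pair.1 hmem
  refine (card_le_totalDegree_of_aeval_update_eq_zero hr i ht fun q hq => ?_).trans hdeg
  have hzero : aeval (v q) (rename Fin.succ r) = 0 := by
    rw [← huw, map_add, map_mul, map_mul, hgA q hq, hhA q hq, mul_zero, mul_zero, add_zero]
  have hline : Function.update X i (C (t q)) = fun j =>
      Polynomial.aeval (X (i + 1) : MvPolynomial (Fin 2) K) ((v q ∘ Fin.succ) j) := by
    rw [hv q hq]
    funext j
    fin_cases i <;> fin_cases j <;> simp [algebraMap_eq]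
  rw [hline, ← comp_aeval_apply, ← aeval_rename, hzero, map_zero]

lemma card_le_of_aeval_xLine_eq_zero {g h : MvPolynomial (Fin 3) K} {b : ℕ}
    (hg : Irreducible g) (hgh : ¬g ∣ h) (hb : h.totalDegree ≤ b) (hb1 : 1 ≤ b)
    {A : Finset (K × K × K)} (hA : Set.InjOn Prod.fst (A : Set (K × K × K)))
    (hgA : ∀ q ∈ A, aeval (xLine q) g = 0) (hhA : ∀ q ∈ A, aeval (xLine q) h = 0) :
    #A ≤ 2 * g.totalDegree * b := by
  refine card_le_of_aeval_line_eq_zero hg hgh hb hb1 hA 0 (fun q _ => ?_) hgA hhA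
  funext j
  fin_cases j <;> simp [xLine]

lemma card_le_of_aeval_yLine_eq_zero {g h : MvPolynomial (Fin 3) K} {b : ℕ}
    (hg : Irreducible g) (hgh : ¬g ∣ h) (hb : h.totalDegree ≤ b) (hb1 : 1 ≤ b)
    {B : Finset (K × K × K)} (hB : Set.InjOn Prod.fst (B : Set (K × K × K)))
    (hgB : ∀ q ∈ B, aeval (yLine q) g = 0) (hhB : ∀ q ∈ B, aeval (yLine q) h = 0) :
    #B ≤ 2 * g.totalDegree * b := by
  refine card_le_of_aeval_line_eq_zero hg hgh hb hb1 hB 1 (fun q _ => ?_) hgB hhB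
  funext j
  fin_cases j <;> simp [yLine]

end Lines

section BipartiteRelations

variable {α β : Type*} (r : α → β → Prop) [∀ a b, Decidable (r a b)]

lemma card_interedges_eq_sum_card_bipartiteAbove (A : Finset α) (B : Finset β) :
    #(Rel.interedges r A B) = ∑ a ∈ A, #(B.bipartiteAbove r a) := by
  simp only [Rel.interedges, bipartiteAbove, card_filter, sum_product]

lemma card_interedges_eq_sum_card_bipartiteBelow (A : Finset α) (B : Finset β) :
    #(Rel.interedges r A B) = ∑ b ∈ B, #(A.bipartiteBelow r b) := by
  rw [card_interedges_eq_sum_card_bipartiteAbove,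
    sum_card_bipartiteAbove_eq_sum_card_bipartiteBelow]

lemma card_interedges_union_le [DecidableEq α] [DecidableEq β] (A A' : Finset α)
    (B B' : Finset β) :
    #(Rel.interedges r (A ∪ A') (B ∪ B')) ≤ #(Rel.interedges r A B) + #(Rel.interedges r A B') +
      (#(Rel.interedges r A' B) + #(Rel.interedges r A' B')) := by
  unfold Rel.interedges
  rw [union_product, product_union, product_union, filter_union, filter_union, filter_union]
  exact (card_union_le _ _).trans (add_le_add (card_union_le _ _) (card_union_le _ _))

/-- Any two distinct elements of one of the sets `A`, `B` have at most `s` common neighbours in the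
other one, for the bipartite graph given by the relation `r`. -/
structure CodegreeLE (s : ℕ) (A : Finset α) (B : Finset β) : Prop where
  left : ∀ a ∈ A, ∀ a' ∈ A, a ≠ a' → #{b ∈ B | r a b ∧ r a' b} ≤ s
  right : ∀ b ∈ B, ∀ b' ∈ B, b ≠ b' → #{a ∈ A | r a b ∧ r a b'} ≤ s

/-- After the deletion of at most `m` elements from each of `A` and `B`, at most `c` pairs of
`A × B` satisfy the relation `r`. -/
def InteredgesLEUpTo [DecidableEq α] [DecidableEq β] (m : ℕ) (c : ℝ) (A : Finset α)
    (B : Finset β) : Prop :=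
  ∃ A' ⊆ A, ∃ B' ⊆ B, #A' ≤ m ∧ #B' ≤ m ∧ (#(Rel.interedges r (A \ A') (B \ B')) : ℝ) ≤ c

variable {r}

lemma CodegreeLE.mono {s : ℕ} {A A' : Finset α} {B B' : Finset β} (h : CodegreeLE r s A B)
    (hA : A' ⊆ A) (hB : B' ⊆ B) : CodegreeLE r s A' B' where
  left a ha a' ha' hne :=
    (card_le_card (filter_subset_filter _ hB)).trans (h.left a (hA ha) a' (hA ha') hne)
  right b hb b' hb' hne :=
    (card_le_card (filter_subset_filter _ hA)).trans (h.right b (hB hb) b' (hB hb') hne)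

lemma CodegreeLE.image {α' β' : Type*} [DecidableEq α'] [DecidableEq β'] {r' : α' → β' → Prop}
    [∀ a b, Decidable (r' a b)] {φ : α → α'} {ψ : β → β'} {s : ℕ} {A : Finset α} {B : Finset β}
    (h : CodegreeLE r s A B) (hr : ∀ a ∈ A, ∀ b ∈ B, r' (φ a) (ψ b) → r a b) :
    CodegreeLE r' s (A.image φ) (B.image ψ) where
  left := by
    refine forall_mem_image.2 fun a ha => forall_mem_image.2 fun a' ha' hne => ?_
    rw [filter_image]
    exact card_image_le.trans ((card_le_card fun b hb => by grind).trans
      (h.left a ha a' ha' fun h => hne (h ▸ rfl)))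
  right := by
    refine forall_mem_image.2 fun b hb => forall_mem_image.2 fun b' hb' hne => ?_
    rw [filter_image]
    exact card_image_le.trans ((card_le_card fun a ha => by grind).trans
      (h.right b hb b' hb' fun h => hne (h ▸ rfl)))

lemma card_interedges_le_card_interedges_image {α' β' : Type*} [DecidableEq α'] [DecidableEq β']
    {r' : α' → β' → Prop} [∀ a b, Decidable (r' a b)] {φ : α → α'} {ψ : β → β'} {A : Finset α}
    {B : Finset β} (hφ : Set.InjOn φ A) (hψ : Set.InjOn ψ B)
    (hr : ∀ a ∈ A, ∀ b ∈ B, r a b → r' (φ a) (ψ b)) :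
    #(Rel.interedges r A B) ≤ #(Rel.interedges r' (A.image φ) (B.image ψ)) := by
  refine card_le_card_of_injOn (Prod.map φ ψ) (fun x hx => ?_) fun x hx y hy hxy => ?_
  · obtain ⟨hA, hB, hrx⟩ := Rel.mem_interedges_iff.1 hx
    exact Rel.mem_interedges_iff.2
      ⟨mem_image_of_mem φ hA, mem_image_of_mem ψ hB, hr _ hA _ hB hrx⟩
  · obtain ⟨hxA, hxB, -⟩ := Rel.mem_interedges_iff.1 hx
    obtain ⟨hyA, hyB, -⟩ := Rel.mem_interedges_iff.1 hy
    exact Prod.ext (hφ hxA hyA (congrArg Prod.fst hxy)) (hψ hxB hyB (congrArg Prod.snd hxy))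

lemma CodegreeLE.card_interedges_le_of_forall {s : ℕ} {A : Finset α} {B : Finset β}
    (h : CodegreeLE r s A B) (hr : ∀ a ∈ A, ∀ b ∈ B, r a b) :
    (#(Rel.interedges r A B) : ℝ) ≤ #A + #B + s * √(#A * #B) := by
  have hmul : (#(Rel.interedges r A B) : ℝ) ≤ #A * #B := by
    exact_mod_cast Rel.card_interedges_le_mul r A B
  have hsqrt : 0 ≤ s * √(#A * #B : ℝ) := by positivity
  rcases le_or_gt #A 1 with hA | hA
  · have : (#A : ℝ) ≤ 1 := by exact_mod_cast hA
    nlinarith [(#A).cast_nonneg (α := ℝ), (#B).cast_nonneg (α := ℝ)]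
  rcases le_or_gt #B 1 with hB | hB
  · have : (#B : ℝ) ≤ 1 := by exact_mod_cast hB
    nlinarith [(#A).cast_nonneg (α := ℝ), (#B).cast_nonneg (α := ℝ)]
  obtain ⟨a, ha, a', ha', hne⟩ := one_lt_card.1 hA
  obtain ⟨b, hb, b', hb', hne'⟩ := one_lt_card.1 hB
  have hBs : (#B : ℝ) ≤ s := by
    have := h.left a ha a' ha' hne
    rw [filter_true_of_mem fun b hb => ⟨hr a ha b hb, hr a' ha' b hb⟩] at this
    exact_mod_cast this
  have hAs : (#A : ℝ) ≤ s := by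
    have := h.right b hb b' hb' hne'
    rw [filter_true_of_mem fun a ha => ⟨hr a ha b hb, hr a ha b' hb'⟩] at this
    exact_mod_cast this
  have hsqrt_le : √(#A * #B : ℝ) ≤ s := by
    rw [Real.sqrt_le_left (by positivity)]
    nlinarith
  have := mul_le_mul_of_nonneg_right hsqrt_le (Real.sqrt_nonneg (#A * #B : ℝ))
  rw [Real.mul_self_sqrt (by positivity)] at this
  linarith [(#A).cast_nonneg (α := ℝ), (#B).cast_nonneg (α := ℝ)]

lemma InteredgesLEUpTo.mono [DecidableEq α] [DecidableEq β] {m m' : ℕ} {c c' : ℝ} {A : Finset α}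
    {B : Finset β} (h : InteredgesLEUpTo r m c A B) (hm : m ≤ m') (hc : c ≤ c') :
    InteredgesLEUpTo r m' c' A B :=
  let ⟨A', hA, B', hB, hcA, hcB, hAB⟩ := h
  ⟨A', hA, B', hB, hcA.trans hm, hcB.trans hm, hAB.trans hc⟩

lemma InteredgesLEUpTo.union [DecidableEq α] [DecidableEq β] {m₁ m₂ : ℕ} {c₁ c₂ d e : ℝ}
    {A₁ A₂ : Finset α} {B₁ B₂ : Finset β} (h₁ : InteredgesLEUpTo r m₁ c₁ A₁ B₁)
    (h₂ : InteredgesLEUpTo r m₂ c₂ A₂ B₂) (hd : #(Rel.interedges r A₁ B₂) ≤ d)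
    (he : #(Rel.interedges r A₂ B₁) ≤ e) :
    InteredgesLEUpTo r (m₁ + m₂) (c₁ + c₂ + d + e) (A₁ ∪ A₂) (B₁ ∪ B₂) := by
  obtain ⟨A₁', hA₁, B₁', hB₁, hcA₁, hcB₁, hc₁⟩ := h₁
  obtain ⟨A₂', hA₂, B₂', hB₂, hcA₂, hcB₂, hc₂⟩ := h₂
  refine ⟨A₁' ∪ A₂', union_subset_union hA₁ hA₂, B₁' ∪ B₂', union_subset_union hB₁ hB₂,
    (card_union_le _ _).trans (add_le_add hcA₁ hcA₂),
    (card_union_le _ _).trans (add_le_add hcB₁ hcB₂), ?_⟩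
  have hA : (A₁ ∪ A₂) \ (A₁' ∪ A₂') ⊆ A₁ \ A₁' ∪ A₂ \ A₂' := by grind
  have hB : (B₁ ∪ B₂) \ (B₁' ∪ B₂') ⊆ B₁ \ B₁' ∪ B₂ \ B₂' := by grind
  have hle := (card_le_card (Rel.interedges_mono (r := r) hA hB)).trans
    (card_interedges_union_le r _ _ _ _)
  have h₁₂ := card_le_card (Rel.interedges_mono (r := r)
    (sdiff_subset : A₁ \ A₁' ⊆ A₁) (sdiff_subset : B₂ \ B₂' ⊆ B₂))
  have h₂₁ := card_le_card (Rel.interedges_mono (r := r)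
    (sdiff_subset : A₂ \ A₂' ⊆ A₂) (sdiff_subset : B₁ \ B₁' ⊆ B₁))
  rify at hle h₁₂ h₂₁
  linarith

lemma InteredgesLEUpTo.exists_card_interedges_le [DecidableEq α] [DecidableEq β] {m : ℕ} {c : ℝ}
    {A : Finset α} {B : Finset β} (h : InteredgesLEUpTo r m c A B) :
    ∃ A' ⊆ A, ∃ B' ⊆ B, #A' ≤ m ∧ #B' ≤ m ∧ (#(Rel.interedges r A B) : ℝ) ≤
      c + #(Rel.interedges r A B') + #(Rel.interedges r A' B) := by
  obtain ⟨A', hA, B', hB, hcA, hcB, hc⟩ := h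
  refine ⟨A', hA, B', hB, hcA, hcB, ?_⟩
  have hsub : Rel.interedges r A B ⊆
      Rel.interedges r (A \ A') (B \ B') ∪ Rel.interedges r A B' ∪ Rel.interedges r A' B := by
    intro x
    simp only [mem_union, Rel.mem_interedges_iff, mem_sdiff]
    tauto
  have hle := (card_le_card hsub).trans
    ((card_union_le _ _).trans (Nat.add_le_add_right (card_union_le _ _) _))
  rify at hle
  linarith

lemma card_bipartiteBelow_insert [DecidableEq α] {S : Finset α} {a : α} (ha : a ∉ S) (b : β) :
    #((insert a S).bipartiteBelow r b) = #(S.bipartiteBelow r b) + if r a b then 1 else 0 := by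
  unfold bipartiteBelow
  rw [filter_insert]
  split
  · rw [card_insert_of_notMem (by simp [ha])]
  · rfl

/- Adding `a` to `S` increases the truncated degree of exactly the unsaturated neighbours of `a`. -/
lemma sum_min_card_bipartiteBelow_insert [DecidableEq α] {S : Finset α} {a : α} (ha : a ∉ S)
    (B : Finset β) (D : ℕ) :
    ∑ b ∈ B, min #((insert a S).bipartiteBelow r b) (D + 1) +
        #({b ∈ B | D < #(S.bipartiteBelow r b)}.bipartiteAbove r a) =
      ∑ b ∈ B, min #(S.bipartiteBelow r b) (D + 1) + #(B.bipartiteAbove r a) := by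
  simp only [bipartiteAbove, filter_filter, card_filter, ← sum_add_distrib]
  refine sum_congr rfl fun b _ => ?_
  rw [card_bipartiteBelow_insert ha]
  grind

/- `S` maximises the sum of the degrees of the elements of `B`, truncated at `D + 1`, minus
`ρ * #S`. -/
lemma exists_subset_forall_card_bipartiteAbove_le (r : α → β → Prop) [∀ a b, Decidable (r a b)]
    (A : Finset α) (B : Finset β) (D : ℕ) (ρ : ℝ) :
    ∃ S ⊆ A, ρ * #S ≤ #B * (D + 1) ∧ ∀ a ∈ A, a ∉ S →
      (#(B.bipartiteAbove r a) : ℝ) ≤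
        ρ + #({b ∈ B | D < #(S.bipartiteBelow r b)}.bipartiteAbove r a) := by
  classical
  set φ : Finset α → ℕ := fun S => ∑ b ∈ B, min #(S.bipartiteBelow r b) (D + 1)
  obtain ⟨S, hS, hmax⟩ := exists_max_image A.powerset (fun S => (φ S : ℝ) - ρ * #S) ⟨∅, by simp⟩
  rw [mem_powerset] at hS
  refine ⟨S, hS, ?_, fun a ha haS => ?_⟩
  · have hempty := hmax ∅ (by simp)
    simp only [card_empty, Nat.cast_zero, mul_zero, sub_zero] at hempty
    have hle : φ S ≤ #B * (D + 1) := sum_le_card_nsmul _ _ _ fun b _ => min_le_right _ _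
    have : (φ S : ℝ) ≤ #B * (D + 1) := by exact_mod_cast hle
    linarith [(φ ∅).cast_nonneg (α := ℝ)]
  · have hinsert := hmax (insert a S) (mem_powerset.2 (insert_subset ha hS))
    simp only [card_insert_of_notMem haS, Nat.cast_add, Nat.cast_one] at hinsert
    have hgain : (φ (insert a S) : ℝ) +
        #({b ∈ B | D < #(S.bipartiteBelow r b)}.bipartiteAbove r a) =
          φ S + #(B.bipartiteAbove r a) := by
      exact_mod_cast sum_min_card_bipartiteBelow_insert haS B D
    linarith

lemma sqrt_pred_add_le {a : ℝ} (ha : 1 ≤ a) : √(a - 1) + 1 / (2 * √a) ≤ √a := by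
  have hpos : 0 < √a := Real.sqrt_pos.2 (by linarith)
  have hsq : √a ^ 2 = a := Real.sq_sqrt (by linarith)
  have hsq' : √(a - 1) ^ 2 = a - 1 := Real.sq_sqrt (by linarith)
  rw [← le_sub_iff_add_le', div_le_iff₀ (mul_pos two_pos hpos)]
  nlinarith [sq_nonneg (√a - √(a - 1))]

lemma div_le_mul_sqrt_card_sub [DecidableEq α] {A : Finset α} {a : α} {c : ℝ} (hc : 0 ≤ c)
    (ha : a ∈ A) : c / (2 * √(#A : ℝ)) ≤ c * √(#A : ℝ) - c * √(#(A.erase a) : ℝ) := by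
  have hcard : (#(A.erase a) : ℝ) = #A - 1 := by
    rw [card_erase_of_mem ha, Nat.cast_sub (card_pos.2 ⟨a, ha⟩), Nat.cast_one]
  have hsqrt := mul_le_mul_of_nonneg_left
    (sqrt_pred_add_le (a := #A) (by exact_mod_cast card_pos.2 ⟨a, ha⟩)) hc
  rw [mul_add, mul_one_div] at hsqrt
  rw [hcard]
  linarith

lemma lt_card_bipartiteAbove_of_card_interedges_erase_le [DecidableEq α] {A : Finset α}
    {B : Finset β} {a : α} {c : ℝ} (hc : 0 ≤ c) (ha : a ∈ A)
    (hAB : c * √(#A : ℝ) < #(Rel.interedges r A B))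
    (herase : #(Rel.interedges r (A.erase a) B) ≤ c * √(#(A.erase a) : ℝ)) :
    c / (2 * √(#A : ℝ)) < #(B.bipartiteAbove r a) := by
  have hsum : (#(Rel.interedges r A B) : ℝ) =
      #(Rel.interedges r (A.erase a) B) + #(B.bipartiteAbove r a) := by
    rw [card_interedges_eq_sum_card_bipartiteAbove, card_interedges_eq_sum_card_bipartiteAbove,
      ← sum_erase_add _ _ ha, Nat.cast_add]
  linarith [div_le_mul_sqrt_card_sub hc ha]

lemma lt_card_bipartiteBelow_of_card_interedges_erase_le [DecidableEq β] {A : Finset α}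
    {B : Finset β} {b : β} {c : ℝ} (hc : 0 ≤ c) (hb : b ∈ B)
    (hAB : c * √(#B : ℝ) < #(Rel.interedges r A B))
    (herase : #(Rel.interedges r A (B.erase b)) ≤ c * √(#(B.erase b) : ℝ)) :
    c / (2 * √(#B : ℝ)) < #(A.bipartiteBelow r b) := by
  have hsum : (#(Rel.interedges r A B) : ℝ) =
      #(Rel.interedges r A (B.erase b)) + #(A.bipartiteBelow r b) := by
    rw [card_interedges_eq_sum_card_bipartiteBelow, card_interedges_eq_sum_card_bipartiteBelow,
      ← sum_erase_add _ _ hb, Nat.cast_add]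
  linarith [div_le_mul_sqrt_card_sub hc hb]

lemma sqrt_mul_add_sqrt_mul_le {a b c d : ℝ} (ha : 0 ≤ a) (hb : 0 ≤ b) (hc : 0 ≤ c)
    (hd : 0 ≤ d) : √(a * b) + √(c * d) ≤ √((a + c) * (b + d)) := by
  have h := Real.sum_sqrt_mul_sqrt_le (s := (univ : Finset (Fin 2))) (f := ![a, c]) (g := ![b, d])
    (by simp [Fin.forall_fin_two, *]) (by simp [Fin.forall_fin_two, *])
  rw [Real.sqrt_mul ha, Real.sqrt_mul hc, Real.sqrt_mul (by positivity)]
  simpa using h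

end BipartiteRelations

section RuledSurfaces

variable {K : Type*} [Field K]

lemma card_le_totalDegree_of_pderiv_eq_zero {p : ℕ} [CharP K p] {g : MvPolynomial (Fin 3) K}
    (hg : g ≠ 0) (hp : g.totalDegree < p) (hU : pderiv 0 g = 0) {B : Finset (K × K × K)}
    (hB : Set.InjOn Prod.fst (B : Set (K × K × K))) (hgB : ∀ r ∈ B, aeval (yLine r) g = 0) :
    #B ≤ g.totalDegree := by
  refine card_le_totalDegree_of_aeval_update_eq_zero hg 2 hB fun r hr => ?_
  have hline : Function.update (Function.update X 2 (C r.1)) 0 (C r.2.1 * X 1 - C r.2.2) = fun j =>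
      Polynomial.aeval (X 1 : MvPolynomial (Fin 3) K) (yLine r j) := by
    funext j
    fin_cases j <;> simp [yLine, algebraMap_eq]
  rw [← aeval_update_eq_of_pderiv_eq_zero hp hU _ (C r.2.1 * X 1 - C r.2.2), hline,
    ← comp_aeval_apply, hgB r hr, map_zero]

/-- An equation of the surface swept out by the tangent lines to the sections `x₁ = const` of the
zero set of `g` at the points of `yLine m`. -/
def tangentSurface (g : MvPolynomial (Fin 3) K) (m : K × K × K) : MvPolynomial (Fin 3) K :=
  Polynomial.aeval (X 1) (aeval (yLine m) (pderiv 0 g)) * (X 0 - C m.2.1 * X 1 + C m.2.2) +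
    Polynomial.aeval (X 1) (aeval (yLine m) (pderiv 2 g)) * (X 2 - C m.1)

lemma eval_tangentSurface (g : MvPolynomial (Fin 3) K) (m : K × K × K) (v : Fin 3 → K) :
    eval v (tangentSurface g m) =
      (aeval (yLine m) (pderiv 0 g)).eval (v 1) * (v 0 - m.2.1 * v 1 + m.2.2) +
        (aeval (yLine m) (pderiv 2 g)).eval (v 1) * (v 2 - m.1) := by
  simp only [tangentSurface, map_add, map_sub, map_mul, eval_aeval_X, eval_X, eval_C]

lemma linesMeet_of_dvd_tangentSurface {g : MvPolynomial (Fin 3) K} {m q r : K × K × K}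
    (hdvd : g ∣ tangentSurface g m) (hq : aeval (xLine q) g = 0) (hr : aeval (yLine r) g = 0)
    (hm : (aeval (yLine m) (pderiv 0 g)).eval q.1 ≠ 0) : LinesMeet q r := by
  have aeval_eq_zero {v : Fin 3 → K[X]} (hv : aeval v g = 0) :
      aeval v (tangentSurface g m) = 0 := by
    obtain ⟨u, hu⟩ := hdvd
    rw [hu, map_mul, hv, zero_mul]
  have hqL := congrArg (Polynomial.eval r.1) (aeval_eq_zero hq)
  have hrL := congrArg (Polynomial.eval q.1) (aeval_eq_zero hr)
  rw [eval_aeval_polynomial, aeval_eq_eval, eval_tangentSurface, Polynomial.eval_zero] at hqL hrL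
  simp only [xLine, yLine, Matrix.cons_val, Polynomial.eval_sub, Polynomial.eval_mul,
    Polynomial.eval_C, Polynomial.eval_X] at hqL hrL hm
  refine mul_left_cancel₀ hm ?_
  linear_combination hqL - hrL

lemma eval_eq_zero_of_mem_span_tangentSurface {p : ℕ} [CharP K p] {g : MvPolynomial (Fin 3) K}
    (hp : g.totalDegree < p) (hg : Prime g) (hinfl : g ∣ inflection g) (hU : ¬g ∣ pderiv 0 g)
    {m : K × K × K} (hm : aeval (yLine m) g = 0) {r : MvPolynomial (Fin 2) K}
    (hr : rename Fin.succ r ∈ Ideal.span {g, tangentSurface g m}) {v : Fin 2 → K}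
    (hv : (aeval (yLine m) (pderiv 0 g)).eval (v 0) ≠ 0) : eval v r = 0 := by
  set c := aeval (yLine m) (pderiv 0 g) with hc
  set e := aeval (yLine m) (pderiv 2 g) with he
  set P : Fin 3 → K := fun i => (yLine m i).eval (v 0) with hP
  have eval_P (f : MvPolynomial (Fin 3) K) : eval P f = (aeval (yLine m) f).eval (v 0) := by
    rw [eval_aeval_polynomial, aeval_eq_eval]
  have htangent := eval_sectionTangentLine_eq_zero hp hg hinfl hU (P := P)
    (by rw [eval_P, hm, Polynomial.eval_zero]) ((v 1 - m.1) / c.eval (v 0))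
  rw [eval_P, eval_P, ← hc, ← he, div_mul_cancel₀ _ hv] at htangent
  set Q : Fin 3 → K := ![P 0 - (v 1 - m.1) / c.eval (v 0) * e.eval (v 0), P 1,
    P 2 + (v 1 - m.1)] with hQ
  have hQL : eval Q (tangentSurface g m) = 0 := by
    rw [eval_tangentSurface, ← hc, ← he]
    simp only [hQ, hP, yLine, Matrix.cons_val, Polynomial.eval_sub, Polynomial.eval_mul,
      Polynomial.eval_C, Polynomial.eval_X]
    field_simp
    ring
  have hQv : Q ∘ Fin.succ = v := by
    funext i
    fin_cases i <;> simp [hQ, hP, yLine]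
  obtain ⟨a, b, hab⟩ := Ideal.mem_span_pair.1 hr
  rw [← hQv, ← eval_rename, ← hab, map_add, map_mul, map_mul, htangent, hQL, mul_zero, mul_zero,
    add_zero]

/- If `g` did not divide the equation, eliminating the coordinate `0` would give a nonzero
polynomial vanishing at all points above which the two surfaces meet, namely at almost all points
of the plane. -/
lemma dvd_tangentSurface [Infinite K] {p : ℕ} [CharP K p] {g : MvPolynomial (Fin 3) K}
    (hp : g.totalDegree < p) (hg : Irreducible g) (hinfl : g ∣ inflection g)
    (hU : ¬g ∣ pderiv 0 g) {m : K × K × K} (hm : aeval (yLine m) g = 0)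
    (hmU : aeval (yLine m) (pderiv 0 g) ≠ 0) : g ∣ tangentSurface g m := by
  by_contra hndvd
  obtain ⟨r, hr0, -, hr⟩ := exists_rename_succ_mem_span_pair hg hndvd
    (le_max_left (tangentSurface g m).totalDegree 1) (le_max_right _ _)
  set c := aeval (yLine m) (pderiv 0 g)
  have hprod : r * Polynomial.aeval (X 0) c = 0 := by
    refine MvPolynomial.funext fun v => ?_
    rw [map_mul, eval_aeval_X, map_zero, mul_eq_zero]
    by_cases hv : c.eval (v 0) = 0
    · exact Or.inr hv
    · exact Or.inl (eval_eq_zero_of_mem_span_tangentSurface hp hg.prime hinfl hU hm hr hv)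
  refine hmU (Polynomial.funext fun x => ?_)
  rw [← eval_aeval_X c (fun _ : Fin 2 => x) 0, (mul_eq_zero.1 hprod).resolve_left hr0, map_zero,
    Polynomial.eval_zero]

variable [DecidableEq K]

lemma card_filter_eval_fst_eq_zero_le {c : K[X]} (hc : c ≠ 0) {A : Finset (K × K × K)}
    (hA : Set.InjOn Prod.fst (A : Set (K × K × K))) :
    #{q ∈ A | c.eval q.1 = 0} ≤ c.natDegree := by
  rw [← card_image_of_injOn (hA.mono (coe_subset.2 (filter_subset _ _)))]
  refine Polynomial.card_le_degree_of_subset_roots fun x hx => ?_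
  obtain ⟨q, hq, rfl⟩ := mem_image.1 hx
  exact (Polynomial.mem_roots hc).2 (mem_filter.1 hq).2

/-- The hypotheses on two families of lines `xLine q`, `q ∈ A`, and `yLine r`, `r ∈ B`, under which
their incidences are bounded: each family lies in distinct parallel planes, and any two lines of
one family are met by at most `s` lines of the other one. -/
structure LineFamilies (s : ℕ) (A B : Finset (K × K × K)) : Prop where
  injOn_left : Set.InjOn Prod.fst (A : Set (K × K × K))
  injOn_right : Set.InjOn Prod.fst (B : Set (K × K × K))
  codegreeLE : CodegreeLE LinesMeet s A B

lemma LineFamilies.mono {s : ℕ} {A A' B B' : Finset (K × K × K)} (h : LineFamilies s A B)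
    (hA : A' ⊆ A) (hB : B' ⊆ B) : LineFamilies s A' B' where
  injOn_left := h.injOn_left.mono (coe_subset.2 hA)
  injOn_right := h.injOn_right.mono (coe_subset.2 hB)
  codegreeLE := h.codegreeLE.mono hA hB

lemma LineFamilies.card_interedges_le_of_dvd_tangentSurface {s : ℕ} {A B : Finset (K × K × K)}
    (h : LineFamilies s A B) {g : MvPolynomial (Fin 3) K} {m : K × K × K}
    (hdvd : g ∣ tangentSurface g m) (hgA : ∀ q ∈ A, aeval (xLine q) g = 0)
    (hgB : ∀ r ∈ B, aeval (yLine r) g = 0) :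
    (#(Rel.interedges LinesMeet (A \ {q ∈ A | (aeval (yLine m) (pderiv 0 g)).eval q.1 = 0}) B) : ℝ)
      ≤ #A + #B + s * √(#A * #B) := by
  set A₀ := {q ∈ A | (aeval (yLine m) (pderiv 0 g)).eval q.1 = 0} with hA₀
  have hmeet : ∀ q ∈ A \ A₀, ∀ r ∈ B, LinesMeet q r := fun q hq r hr => by
    have hq' := mem_sdiff.1 hq
    exact linesMeet_of_dvd_tangentSurface hdvd (hgA q hq'.1) (hgB r hr) fun h0 =>
      hq'.2 (mem_filter.2 ⟨hq'.1, h0⟩)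
  refine ((h.codegreeLE.mono sdiff_subset subset_rfl).card_interedges_le_of_forall hmeet).trans ?_
  have : (#(A \ A₀) : ℝ) ≤ #A := by exact_mod_cast card_le_card sdiff_subset
  gcongr

/- The surface `g = 0` has an inflection at every point of each `xLine` it contains. Either this
bounds the number of these lines, or the surface is ruled by lines in the planes `x₁ = const`,
almost all of which meet every `yLine` in the surface. -/
lemma LineFamilies.interedgesLEUpTo_of_irreducible [Infinite K] {p s : ℕ} [CharP K p]
    {A B : Finset (K × K × K)} (h : LineFamilies s A B) {g : MvPolynomial (Fin 3) K}
    (hg : Irreducible g) (hp : g.totalDegree < p) (hgA : ∀ q ∈ A, aeval (xLine q) g = 0)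
    (hgB : ∀ r ∈ B, aeval (yLine r) g = 0) :
    InteredgesLEUpTo LinesMeet (6 * g.totalDegree ^ 2) (#A + #B + s * √(#A * #B)) A B := by
  have hdeg := totalDegree_pos_of_irreducible hg
  have hdegU := (totalDegree_pderiv_le 0 g).trans (Nat.sub_le _ _)
  have hnonneg : (0 : ℝ) ≤ #A + #B + s * √(#A * #B) := by positivity
  have of_card_right (hB : #B ≤ 6 * g.totalDegree ^ 2) :
      InteredgesLEUpTo LinesMeet (6 * g.totalDegree ^ 2) (#A + #B + s * √(#A * #B)) A B :=
    ⟨∅, empty_subset _, B, subset_rfl, by simp, hB, by simpa [Rel.interedges] using hnonneg⟩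
  by_cases hinfl : g ∣ inflection g
  swap
  · refine ⟨A, subset_rfl, ∅, empty_subset _, ?_, by simp, by simpa [Rel.interedges] using hnonneg⟩
    have := card_le_of_aeval_xLine_eq_zero hg hinfl (totalDegree_inflection_le g) (by lia)
      h.injOn_left hgA fun q hq => aeval_xLine_inflection_eq_zero (hgA q hq)
    linarith
  by_cases hU : g ∣ pderiv 0 g
  · have := card_le_totalDegree_of_pderiv_eq_zero hg.ne_zero hp
      (pderiv_eq_zero_of_dvd_pderiv 0 hdeg hU) h.injOn_right hgB
    exact of_card_right (by nlinarith)
  by_cases hUB : ∀ r ∈ B, aeval (yLine r) (pderiv 0 g) = 0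
  · have := card_le_of_aeval_yLine_eq_zero hg hU hdegU hdeg h.injOn_right
      hgB hUB
    exact of_card_right (by nlinarith)
  · push Not at hUB
    obtain ⟨m, hm, hmU⟩ := hUB
    refine ⟨{q ∈ A | (aeval (yLine m) (pderiv 0 g)).eval q.1 = 0}, filter_subset _ _, ∅,
      empty_subset _, ?_, by simp, ?_⟩
    · have := card_filter_eval_fst_eq_zero_le hmU h.injOn_left
      have := natDegree_aeval_le_totalDegree (natDegree_yLine_le m) (pderiv 0 g)
      nlinarith
    · rw [sdiff_empty]
      exact h.card_interedges_le_of_dvd_tangentSurface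
        (dvd_tangentSurface hp hg hinfl hU (hgB m hm) hmU) hgA hgB

end RuledSurfaces

section PolynomialMethod

variable {K : Type*} [Field K]

lemma finrank_restrictDegree (σ : Type*) [Fintype σ] (n : ℕ) :
    Module.finrank K (restrictDegree σ K n) = (n + 1) ^ Fintype.card σ := by
  have e : {m : σ →₀ ℕ | ∀ i, m i ≤ n} ≃ (σ → Set.Iic n) :=
    (Finsupp.equivFunOnFinite.subtypeEquiv (q := fun m => ∀ i, m i ≤ n) fun _ => Iff.rfl).trans
      (Equiv.subtypePiEquivPi (p := fun _ k => k ≤ n))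
  have hbasis := Module.finrank_eq_nat_card_basis
    (basisRestrictSupport K {m : σ →₀ ℕ | ∀ i, m i ≤ n})
  rw [Nat.card_congr e, Nat.card_fun, Nat.card_eq_fintype_card, Nat.card_eq_fintype_card,
    Fintype.card_Iic, Nat.card_Iic] at hbasis
  exact hbasis

lemma totalDegree_le_of_mem_restrictDegree {σ : Type*} [Fintype σ] {n : ℕ} {f : MvPolynomial σ K}
    (hf : f ∈ restrictDegree σ K n) : f.totalDegree ≤ Fintype.card σ * n := by
  rw [mem_restrictDegree] at hf
  refine Finset.sup_le fun m hm => ?_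
  rw [Finsupp.sum_fintype _ _ fun _ => rfl]
  exact sum_le_card_nsmul _ _ _ fun i _ => hf m hm i

lemma exists_ne_zero_forall_aeval_eq_zero {ι σ : Type*} [Fintype σ] {S : Finset ι}
    {v : ι → σ → K[X]} (hv : ∀ q i, (v q i).natDegree ≤ 1) {n : ℕ}
    (hS : #S * (Fintype.card σ * n + 1) < (n + 1) ^ Fintype.card σ) :
    ∃ f : MvPolynomial σ K, f ≠ 0 ∧ f.totalDegree ≤ Fintype.card σ * n ∧
      ∀ q ∈ S, aeval (v q) f = 0 := by
  set d := Fintype.card σ * n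
  let restrictionCoeffs : restrictDegree σ K n →ₗ[K] (S × Fin (d + 1) → K) :=
    LinearMap.pi fun q => Polynomial.lcoeff K q.2 ∘ₗ (aeval (v q.1)).toLinearMap ∘ₗ
      (restrictDegree σ K n).subtype
  have hker : LinearMap.ker restrictionCoeffs ≠ ⊥ := by
    apply LinearMap.ker_ne_bot_of_finrank_lt
    simpa [finrank_restrictDegree] using hS
  obtain ⟨f, hf, hf0⟩ := (Submodule.ne_bot_iff _).1 hker
  have hdeg := totalDegree_le_of_mem_restrictDegree f.2
  refine ⟨f, Subtype.coe_ne_coe.2 hf0, hdeg, fun q hq => Polynomial.ext fun k => ?_⟩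
  rcases Nat.lt_or_ge k (d + 1) with hk | hk
  · exact congrFun (LinearMap.mem_ker.1 hf) (⟨q, hq⟩, ⟨k, hk⟩)
  · exact Polynomial.coeff_eq_zero_of_natDegree_lt
      (((natDegree_aeval_le_totalDegree (hv q) _).trans hdeg).trans_lt hk)

variable [DecidableEq K] {A B : Finset (K × K × K)} {f : MvPolynomial (Fin 3) K}

lemma aeval_yLine_eq_zero_of_totalDegree_lt
    (hA : Set.InjOn Prod.fst (A : Set (K × K × K))) (hfA : ∀ q ∈ A, aeval (xLine q) f = 0)
    {r : K × K × K} (hr : f.totalDegree < #(A.bipartiteBelow LinesMeet r)) :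
    aeval (yLine r) f = 0 := by
  refine aeval_eq_zero_of_totalDegree_lt_card (natDegree_yLine_le r)
    (hA.mono (coe_subset.2 (filter_subset _ _))) hr fun q hq => ?_
  obtain ⟨hqA, hqr⟩ := mem_filter.1 hq
  rw [← hqr.eval_aeval_xLine, hfA q hqA, Polynomial.eval_zero]

lemma aeval_xLine_eq_zero_of_totalDegree_lt
    (hB : Set.InjOn Prod.fst (B : Set (K × K × K))) (hfB : ∀ r ∈ B, aeval (yLine r) f = 0)
    {q : K × K × K} (hq : f.totalDegree < #(B.bipartiteAbove LinesMeet q)) :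
    aeval (xLine q) f = 0 := by
  refine aeval_eq_zero_of_totalDegree_lt_card (natDegree_xLine_le q)
    (hB.mono (coe_subset.2 (filter_subset _ _))) hq fun r hr => ?_
  obtain ⟨hrB, hqr⟩ := mem_filter.1 hr
  rw [hqr.eval_aeval_xLine, hfB r hrB, Polynomial.eval_zero]

lemma card_interedges_le_of_aeval_yLine_ne_zero
    (hA : Set.InjOn Prod.fst (A : Set (K × K × K))) (hfA : ∀ q ∈ A, aeval (xLine q) f = 0)
    (hfB : ∀ r ∈ B, aeval (yLine r) f ≠ 0) :
    #(Rel.interedges LinesMeet A B) ≤ f.totalDegree * #B := by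
  rw [card_interedges_eq_sum_card_bipartiteBelow, mul_comm]
  refine sum_le_card_nsmul _ _ _ fun r hr => ?_
  contrapose! hfB
  exact ⟨r, hr, aeval_yLine_eq_zero_of_totalDegree_lt hA hfA hfB⟩

lemma card_interedges_le_of_aeval_xLine_ne_zero
    (hB : Set.InjOn Prod.fst (B : Set (K × K × K))) (hfB : ∀ r ∈ B, aeval (yLine r) f = 0)
    (hfA : ∀ q ∈ A, aeval (xLine q) f ≠ 0) :
    #(Rel.interedges LinesMeet A B) ≤ f.totalDegree * #A := by
  rw [card_interedges_eq_sum_card_bipartiteAbove, mul_comm]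
  refine sum_le_card_nsmul _ _ _ fun q hq => ?_
  contrapose! hfA
  exact ⟨q, hq, aeval_xLine_eq_zero_of_totalDegree_lt hB hfB hfA⟩

/- The lines on which `g` vanishes and the remaining ones are treated separately: a line on which
`g` does not vanish meets at most `g.totalDegree` lines on which it does. -/
lemma LineFamilies.interedgesLEUpTo_mul_of_irreducible [Infinite K] {p s : ℕ} [CharP K p]
    {g : MvPolynomial (Fin 3) K} (h : LineFamilies s A B) (hg : Irreducible g)
    (hp : g.totalDegree < p) (hf : f ≠ 0) (hfA : ∀ q ∈ A, aeval (xLine q) (g * f) = 0)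
    (hfB : ∀ r ∈ B, aeval (yLine r) (g * f) = 0)
    (ih : ∀ {A' B'}, A' ⊆ A → B' ⊆ B → (∀ q ∈ A', aeval (xLine q) f = 0) →
      (∀ r ∈ B', aeval (yLine r) f = 0) → InteredgesLEUpTo LinesMeet (6 * f.totalDegree ^ 2)
        ((f.totalDegree + 1) * (#A' + #B') + s * √(#A' * #B')) A' B') :
    InteredgesLEUpTo LinesMeet (6 * (g * f).totalDegree ^ 2)
      (((g * f).totalDegree + 1) * (#A + #B) + s * √(#A * #B)) A B := by
  classical
  rw [totalDegree_mul_of_isDomain hg.ne_zero hf]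
  set A₁ := {q ∈ A | aeval (xLine q) g = 0}
  set A₂ := {q ∈ A | ¬aeval (xLine q) g = 0}
  set B₁ := {r ∈ B | aeval (yLine r) g = 0}
  set B₂ := {r ∈ B | ¬aeval (yLine r) g = 0}
  have hgA₁ : ∀ q ∈ A₁, aeval (xLine q) g = 0 := fun q hq => (mem_filter.1 hq).2
  have hgB₁ : ∀ r ∈ B₁, aeval (yLine r) g = 0 := fun r hr => (mem_filter.1 hr).2
  have hfA₂ : ∀ q ∈ A₂, aeval (xLine q) f = 0 := fun q hq => by
    simpa [(mem_filter.1 hq).2] using hfA q (mem_filter.1 hq).1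
  have hfB₂ : ∀ r ∈ B₂, aeval (yLine r) f = 0 := fun r hr => by
    simpa [(mem_filter.1 hr).2] using hfB r (mem_filter.1 hr).1
  have h₁ : LineFamilies s A₁ B₁ := h.mono (filter_subset _ _) (filter_subset _ _)
  have h₁₂ := card_interedges_le_of_aeval_yLine_ne_zero h₁.injOn_left hgA₁
    (fun r (hr : r ∈ B₂) => (mem_filter.1 hr).2)
  have h₂₁ := card_interedges_le_of_aeval_xLine_ne_zero h₁.injOn_right hgB₁
    (fun q (hq : q ∈ A₂) => (mem_filter.1 hq).2)
  have hunion := (h₁.interedgesLEUpTo_of_irreducible hg hp hgA₁ hgB₁).union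
    (ih (filter_subset _ _) (filter_subset _ _) hfA₂ hfB₂) (Nat.cast_le.2 h₁₂) (Nat.cast_le.2 h₂₁)
  rw [filter_union_filter_not_eq, filter_union_filter_not_eq] at hunion
  have hA : (#A : ℝ) = #A₁ + #A₂ := by exact_mod_cast (card_filter_add_card_filter_not _).symm
  have hB : (#B : ℝ) = #B₁ + #B₂ := by exact_mod_cast (card_filter_add_card_filter_not _).symm
  have hsqrt := mul_le_mul_of_nonneg_left (sqrt_mul_add_sqrt_mul_le (a := #A₁) (b := #B₁)
    (c := #A₂) (d := #B₂) (by simp) (by simp) (by simp) (by simp)) (Nat.cast_nonneg (α := ℝ) s)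
  refine hunion.mono (by nlinarith [Nat.zero_le (g.totalDegree * f.totalDegree)]) ?_
  rw [hA, hB]
  push_cast
  have : (0 : ℝ) ≤ g.totalDegree * (#A₁ + #B₁) + f.totalDegree * (#A₁ + #B₁) := by positivity
  linarith

lemma LineFamilies.interedgesLEUpTo_of_ne_zero [Infinite K] {p s : ℕ} [CharP K p]
    (h : LineFamilies s A B) (hf : f ≠ 0) (hp : f.totalDegree < p)
    (hfA : ∀ q ∈ A, aeval (xLine q) f = 0) (hfB : ∀ r ∈ B, aeval (yLine r) f = 0) :
    InteredgesLEUpTo LinesMeet (6 * f.totalDegree ^ 2)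
      ((f.totalDegree + 1) * (#A + #B) + s * √(#A * #B)) A B := by
  induction f using UniqueFactorizationMonoid.induction_on_prime generalizing A B with
  | h₁ => exact absurd rfl hf
  | h₂ f hunit =>
    have hA : A = ∅ := eq_empty_of_forall_notMem fun q hq =>
      not_isUnit_zero (hfA q hq ▸ hunit.map (aeval (xLine q)))
    refine ⟨∅, empty_subset _, ∅, empty_subset _, by simp, by simp, ?_⟩
    rw [hA, empty_sdiff, Rel.interedges_empty_left, card_empty, Nat.cast_zero]
    positivity
  | h₃ f g hf0 hg ih =>
    have hdeg := totalDegree_mul_of_isDomain hg.ne_zero hf0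
    exact h.interedgesLEUpTo_mul_of_irreducible hg.irreducible (by lia) hf0 hfA hfB
      fun hA hB => ih (h.mono hA hB) hf0 (by lia)

end PolynomialMethod

section LineIncidences

variable {K : Type*} [Field K] [DecidableEq K] {A B : Finset (K × K × K)}

/- A polynomial vanishing on a few well-chosen lines `xLine q` vanishes on all the lines `yLine r`
that meet more than `3 * n` of them, hence on the lines that meet many of these. -/
lemma exists_ne_zero_forall_mem_aeval_eq_zero
    (hA : Set.InjOn Prod.fst (A : Set (K × K × K)))
    (hB : Set.InjOn Prod.fst (B : Set (K × K × K))) {n : ℕ} {ρ : ℝ} (hρ : 0 < ρ)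
    (hn : 3 * (#B * (3 * n + 1)) ≤ ρ * n ^ 2)
    (hdegA : ∀ q ∈ A, ρ + 3 * n < #(B.bipartiteAbove LinesMeet q))
    (hdegB : ∀ r ∈ B, 3 * n < #(A.bipartiteBelow LinesMeet r)) :
    ∃ f : MvPolynomial (Fin 3) K, f ≠ 0 ∧ f.totalDegree ≤ 3 * n ∧
      (∀ q ∈ A, aeval (xLine q) f = 0) ∧ ∀ r ∈ B, aeval (yLine r) f = 0 := by
  obtain ⟨S, hSA, hS, hSB⟩ := exists_subset_forall_card_bipartiteAbove_le LinesMeet A B (3 * n) ρ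
  have hcard : 3 * #S ≤ n ^ 2 := by
    have : ρ * (3 * #S) ≤ ρ * n ^ 2 := by
      push_cast at hS
      linarith
    exact_mod_cast le_of_mul_le_mul_left this hρ
  obtain ⟨f, hf, hdeg, hfS⟩ := exists_ne_zero_forall_aeval_eq_zero (S := S) (n := n)
    natDegree_xLine_le (by rw [Fintype.card_fin]; nlinarith)
  rw [Fintype.card_fin] at hdeg
  set B₀ := {r ∈ B | 3 * n < #(S.bipartiteBelow LinesMeet r)}
  have hfB₀ : ∀ r ∈ B₀, aeval (yLine r) f = 0 := fun r hr =>
    aeval_yLine_eq_zero_of_totalDegree_lt (hA.mono (coe_subset.2 hSA)) hfS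
      (hdeg.trans_lt (mem_filter.1 hr).2)
  have hfA : ∀ q ∈ A, aeval (xLine q) f = 0 := fun q hq => by
    by_cases hqS : q ∈ S
    · exact hfS q hqS
    · refine aeval_xLine_eq_zero_of_totalDegree_lt (hB.mono (coe_subset.2 (filter_subset _ _))) hfB₀
        (hdeg.trans_lt ?_)
      have := hSB q hq hqS
      have := hdegA q hq
      have : ((3 * n : ℕ) : ℝ) < #(B₀.bipartiteAbove LinesMeet q) := by
        push_cast
        linarith
      exact_mod_cast this
  exact ⟨f, hf, hdeg, hfA, fun r hr =>
    aeval_yLine_eq_zero_of_totalDegree_lt hA hfA (hdeg.trans_lt (hdegB r hr))⟩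

lemma exists_nat_degree {α β ν : ℝ} (hα : 0 < α) (hβ : 0 < β) (hν : 0 < ν)
    (hbig : 10000 * ν < α * β) : ∃ n : ℕ, (3 * n + 1) * (30 * ν) ≤ α * β ∧
      3 * (β ^ 2 * (3 * n + 1)) ≤ 10000 * ν * β / (4 * α) * n ^ 2 := by
  set δ := α * β / ν with hδ
  have hδν : δ * ν = α * β := by rw [hδ]; field_simp
  have hδlarge : 10000 < δ := by rwa [hδ, lt_div_iff₀ hν]
  have hle : δ / 120 ≤ ⌈δ / 120⌉₊ := Nat.le_ceil _
  have hlt : (⌈δ / 120⌉₊ : ℝ) < δ / 120 + 1 := Nat.ceil_lt_add_one (by positivity)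
  set n := ⌈δ / 120⌉₊
  refine ⟨n, ?_, ?_⟩
  · calc (3 * n + 1) * (30 * ν) ≤ (δ / 30) * (30 * ν) := by gcongr; linarith
      _ = α * β := by rw [← hδν]; ring
  · have hn : 1 ≤ (n : ℝ) := by linarith
    have hρ : 10000 * ν * β / (4 * α) * δ = 2500 * β ^ 2 := by rw [hδ]; field_simp; norm_num
    calc 3 * (β ^ 2 * (3 * n + 1)) ≤ 3 * (β ^ 2 * (4 * n)) := by gcongr; linarith [hn]
      _ ≤ 10000 * ν * β / (4 * α) * δ / 120 * n := by
        rw [hρ]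
        nlinarith [mul_nonneg (sq_nonneg β) (Nat.cast_nonneg (α := ℝ) n)]
      _ = 10000 * ν * β / (4 * α) * (δ / 120) * n := by ring
      _ ≤ 10000 * ν * β / (4 * α) * n * n := by gcongr
      _ = _ := by ring

lemma le_div_of_mul_le_mul {X α β ν : ℝ} (hα : 0 < α) (hν : 0 < ν) (hβν : β ≤ ν)
    (hX : X * (30 * ν) ≤ α * β) : X ≤ α / 30 := by
  rw [le_div_iff₀ (by norm_num)]
  refine le_of_mul_le_mul_right ?_ hν
  nlinarith

lemma LineFamilies.exists_interedgesLEUpTo_of_lt_degree [Infinite K] {p s : ℕ} [CharP K p]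
    (h : LineFamilies s A B) {α β ν : ℝ} (hα : 0 < α) (hβ : 0 < β) (hαν : α ≤ ν) (hβν : β ≤ ν)
    (hA : α ^ 2 = #A) (hB : β ^ 2 = #B) (hνp : ν ≤ p) (hbig : 10000 * ν < α * β)
    (hdegA : ∀ q ∈ A, 10000 * ν * β / (2 * α) < #(B.bipartiteAbove LinesMeet q))
    (hdegB : ∀ r ∈ B, 10000 * ν * α / (2 * β) < #(A.bipartiteBelow LinesMeet r)) :
    ∃ n : ℕ, (3 * n + 1) * (30 * ν) ≤ α * β ∧ InteredgesLEUpTo LinesMeet (6 * (3 * n) ^ 2)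
      ((3 * n + 1) * (α ^ 2 + β ^ 2) + s * (α * β)) A B := by
  have hν : 0 < ν := hα.trans_le hαν
  obtain ⟨n, hn, hρ⟩ := exists_nat_degree hα hβ hν hbig
  have hnα : (3 * n + 1 : ℝ) ≤ α / 30 := le_div_of_mul_le_mul hα hν hβν hn
  have hnβ : (3 * n + 1 : ℝ) ≤ β / 30 := le_div_of_mul_le_mul hβ hν hαν (mul_comm α β ▸ hn)
  have le_quotient {γ γ' : ℝ} (hγ : 0 < γ) (hγν : γ ≤ ν) (hγ' : 0 < γ') :
      γ' / 30 ≤ 10000 * ν * γ' / (4 * γ) := by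
    rw [div_le_div_iff₀ (by norm_num) (by positivity)]
    nlinarith [mul_le_mul_of_nonneg_left hγν hγ'.le]
  obtain ⟨f, hf, hdeg, hfA, hfB⟩ := exists_ne_zero_forall_mem_aeval_eq_zero h.injOn_left
    h.injOn_right (n := n) (ρ := 10000 * ν * β / (4 * α)) (by positivity) (by rwa [← hB])
    (fun q hq => by
      have hle := le_quotient hα hαν hβ
      have hhalf : 10000 * ν * β / (2 * α) = 2 * (10000 * ν * β / (4 * α)) := by
        field_simp; norm_num
      linarith [hdegA q hq])
    (fun r hr => by
      have hle := le_quotient hβ hβν hα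
      have hhalf : 10000 * ν * α / (2 * β) = 2 * (10000 * ν * α / (4 * β)) := by
        field_simp; norm_num
      rify
      linarith [hdegB r hr])
  have hdegX : (f.totalDegree : ℝ) ≤ 3 * n := by exact_mod_cast hdeg
  have hp : f.totalDegree < p := by
    rify
    linarith
  refine ⟨n, hn, (h.interedgesLEUpTo_of_ne_zero hf hp hfA hfB).mono (by gcongr) ?_⟩
  rw [← hA, ← hB, ← mul_pow, Real.sqrt_sq (by positivity)]
  gcongr

lemma add_add_le_of_mul_le_mul {α β ν X s : ℝ} (hα : 0 < α) (hβ : 0 < β) (hαν : α ≤ ν)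
    (hβν : β ≤ ν) (hs : s ≤ ν) (hX : X * (30 * ν) ≤ α * β) :
    X * (α ^ 2 + β ^ 2) + s * (α * β) + 10000 * (ν * α * (3 * X)) + 10000 * (ν * (3 * X) * β) ≤
      10000 * (ν * α * β) := by
  have hν : 0 < ν := hα.trans_le hαν
  have hXα : X ≤ α / 30 := le_div_of_mul_le_mul hα hν hβν hX
  have hXβ : X ≤ β / 30 := le_div_of_mul_le_mul hβ hν hαν (mul_comm α β ▸ hX)
  have hα2 : X * α ^ 2 ≤ ν * α * β := by nlinarith [mul_pos hα hβ, mul_pos (mul_pos hα hα) hβ]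
  have hβ2 : X * β ^ 2 ≤ ν * α * β := by nlinarith [mul_pos hα hβ, mul_pos (mul_pos hβ hβ) hα]
  have hsαβ : s * (α * β) ≤ ν * α * β := by nlinarith [mul_pos hα hβ]
  have hXνα : X * (30 * ν) * α ≤ ν * α * β := by nlinarith [mul_pos hα hβ]
  have hXνβ : X * (30 * ν) * β ≤ ν * α * β := by nlinarith [mul_pos hα hβ]
  linarith [show 0 < ν * α * β by positivity]

lemma card_lt_and_sqrt_card_le {T : Type*} {S S' : Finset T} {α β ν : ℝ} {n : ℕ} (hα : 0 < α)
    (hν : 0 < ν) (hβν : β ≤ ν) (hn : (3 * n + 1) * (30 * ν) ≤ α * β) (hS : α ^ 2 = #S)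
    (hS' : #S' ≤ 6 * (3 * n) ^ 2) : #S' < #S ∧ √(#S' : ℝ) ≤ 3 * (3 * n + 1) := by
  have hnα : (3 * n + 1 : ℝ) ≤ α / 30 := le_div_of_mul_le_mul hα hν hβν hn
  have hcard : (#S' : ℝ) ≤ 6 * (3 * n) ^ 2 := by exact_mod_cast hS'
  constructor
  · have : (#S' : ℝ) < #S := by
      rw [← hS]
      nlinarith [n.cast_nonneg (α := ℝ)]
    exact_mod_cast this
  · rw [Real.sqrt_le_left (by positivity)]
    nlinarith [n.cast_nonneg (α := ℝ)]

lemma LineFamilies.card_interedges_le_of_forall_subset [Infinite K] {p s : ℕ} [CharP K p]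
    (h : LineFamilies s A B) {ν : ℝ} (hs : s ≤ ν) (hνp : ν ≤ p) (hAν : √(#A : ℝ) ≤ ν)
    (hBν : √(#B : ℝ) ≤ ν) (ih : ∀ A' ⊆ A, ∀ B' ⊆ B, #A' + #B' < #A + #B →
      (#(Rel.interedges LinesMeet A' B') : ℝ) ≤ 10000 * (ν * √(#A' : ℝ) * √(#B' : ℝ))) :
    (#(Rel.interedges LinesMeet A B) : ℝ) ≤ 10000 * (ν * √(#A : ℝ) * √(#B : ℝ)) := by
  rcases A.eq_empty_or_nonempty with rfl | hAne
  · simp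
  rcases B.eq_empty_or_nonempty with rfl | hBne
  · simp [Rel.interedges]
  set α := √(#A : ℝ)
  set β := √(#B : ℝ)
  have hα : 0 < α := Real.sqrt_pos.2 (by exact_mod_cast hAne.card_pos)
  have hβ : 0 < β := Real.sqrt_pos.2 (by exact_mod_cast hBne.card_pos)
  have hν : 0 < ν := hα.trans_le hAν
  have hα2 : α ^ 2 = #A := Real.sq_sqrt (Nat.cast_nonneg _)
  have hβ2 : β ^ 2 = #B := Real.sq_sqrt (Nat.cast_nonneg _)
  by_contra! hlt
  have hbig : 10000 * ν < α * β := by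
    have hmul : (#(Rel.interedges LinesMeet A B) : ℝ) ≤ #A * #B := by
      exact_mod_cast Rel.card_interedges_le_mul LinesMeet A B
    rw [← hα2, ← hβ2] at hmul
    exact lt_of_mul_lt_mul_right (a := α * β) (by linarith) (by positivity)
  obtain ⟨n, hn, hupto⟩ := h.exists_interedgesLEUpTo_of_lt_degree hα hβ hAν hBν hα2 hβ2 hνp hbig
    (fun q hq => lt_card_bipartiteAbove_of_card_interedges_erase_le (by positivity) hq
      (by linarith) ((ih _ (erase_subset q A) _ Subset.rfl
        (Nat.add_lt_add_right (card_erase_lt_of_mem hq) _)).trans_eq (by ring)))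
    (fun r hr => lt_card_bipartiteBelow_of_card_interedges_erase_le (by positivity) hr
      (by linarith) ((ih _ Subset.rfl _ (erase_subset r B)
        (Nat.add_lt_add_left (card_erase_lt_of_mem hr) _)).trans_eq (by ring)))
  obtain ⟨A', hA', B', hB', hcA, hcB, hle⟩ := hupto.exists_card_interedges_le
  obtain ⟨hltA, hsqrtA⟩ := card_lt_and_sqrt_card_le hα hν hBν hn hα2 hcA
  obtain ⟨hltB, hsqrtB⟩ := card_lt_and_sqrt_card_le hβ hν hAν (mul_comm α β ▸ hn) hβ2 hcB
  have hAB' := ih A Subset.rfl B' hB' (by lia)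
  have hA'B := ih A' hA' B Subset.rfl (by lia)
  have hAB'_le : 10000 * (ν * α * √(#B' : ℝ)) ≤ 10000 * (ν * α * (3 * (3 * n + 1))) := by gcongr
  have hA'B_le : 10000 * (ν * √(#A' : ℝ) * β) ≤ 10000 * (ν * (3 * (3 * n + 1)) * β) := by gcongr
  linarith [add_add_le_of_mul_le_mul hα hβ hAν hBν hs hn]

theorem LineFamilies.card_interedges_le [Infinite K] {p s : ℕ} [CharP K p]
    (h : LineFamilies s A B) {ν : ℝ} (hs : s ≤ ν) (hνp : ν ≤ p) (hA : √(#A : ℝ) ≤ ν)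
    (hB : √(#B : ℝ) ≤ ν) :
    (#(Rel.interedges LinesMeet A B) : ℝ) ≤ 10000 * (ν * √(#A : ℝ) * √(#B : ℝ)) := by
  induction hk : #A + #B using Nat.strong_induction_on generalizing A B with
  | _ k ih =>
    refine h.card_interedges_le_of_forall_subset hs hνp hA hB fun A' hA' B' hB' hlt => ?_
    have hcardA : (#A' : ℝ) ≤ #A := by exact_mod_cast card_le_card hA'
    have hcardB : (#B' : ℝ) ≤ #B := by exact_mod_cast card_le_card hB'
    exact ih _ (hk ▸ hlt) (h.mono hA' hB') ((Real.sqrt_le_sqrt hcardA).trans hA)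
      ((Real.sqrt_le_sqrt hcardB).trans hB) rfl

end LineIncidences

section GenericCoordinates

/- The lines `xLine q` and `yLine r` meet if and only if the vectors `(q.1, q.2.1, q.2.2, 1)` and
`(r.2.1, r.1, -1, -r.2.2)` are orthogonal. A shear of the first vectors together with the
contragredient shear of the second ones preserves this relation, and with indeterminate
coefficients it makes the first coordinates of the lines in each family distinct. -/

variable {F : Type*} [Field F]

/-- The first coordinate of the generic shear of `(q.1, q.2.1, q.2.2, 1)`. -/
def xNum (q : F × F × F) : MvPolynomial (Fin 4) F :=
  C q.1 + X 0 * C q.2.2 + X 1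

/-- The second coordinate of the generic shear of `(q.1, q.2.1, q.2.2, 1)`. -/
def xDen (q : F × F × F) : MvPolynomial (Fin 4) F :=
  C q.2.1 + X 2 * C q.2.2 + X 3

/-- Minus the third coordinate of the contragredient shear of `(r.2.1, r.1, -1, -r.2.2)`. -/
def yNum (r : F × F × F) : MvPolynomial (Fin 4) F :=
  1 + X 0 * C r.2.1 + X 2 * C r.1

/-- Minus the fourth coordinate of the contragredient shear of `(r.2.1, r.1, -1, -r.2.2)`. -/
def yDen (r : F × F × F) : MvPolynomial (Fin 4) F :=
  C r.2.2 + X 1 * C r.2.1 + X 3 * C r.1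

lemma xDen_ne_zero (q : F × F × F) : xDen q ≠ 0 := by
  intro h
  simpa [xDen] using congrArg (eval ![0, 0, 0, 1 - q.2.1]) h

lemma yDen_ne_zero {r : F × F × F} (hr : r.2.1 ≠ 0) : yDen r ≠ 0 := by
  intro h
  simpa [yDen, hr] using congrArg (eval ![0, (1 - r.2.2) / r.2.1, 0, 0]) h

lemma eq_of_xNum_mul_xDen_eq {q q' : F × F × F} (h : xNum q * xDen q' = xNum q' * xDen q) :
    q = q' := by
  have heval (a b c d : F) : (q.1 + a * q.2.2 + b) * (q'.2.1 + c * q'.2.2 + d) =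
      (q'.1 + a * q'.2.2 + b) * (q.2.1 + c * q.2.2 + d) := by
    simpa [xNum, xDen] using congrArg (eval ![a, b, c, d]) h
  have h₁ : q.1 = q'.1 := by linear_combination heval 0 (-q.1) 0 (1 - q.2.1)
  have h₂ : q.2.1 = q'.2.1 := by
    have := heval 0 (1 - q.1) 0 (-q.2.1)
    rw [← h₁] at this
    linear_combination -this
  have h₃ : q.2.2 = q'.2.2 := by
    have := heval 1 0 0 (1 - q.2.1)
    rw [← h₁, ← h₂] at this
    linear_combination this
  exact Prod.ext h₁ (Prod.ext h₂ h₃)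

lemma eq_of_yNum_mul_yDen_eq {r r' : F × F × F} (h : yNum r * yDen r' = yNum r' * yDen r) :
    r = r' := by
  have heval (a b c d : F) : (1 + a * r.2.1 + c * r.1) * (r'.2.2 + b * r'.2.1 + d * r'.1) =
      (1 + a * r'.2.1 + c * r'.1) * (r.2.2 + b * r.2.1 + d * r.1) := by
    simpa [yNum, yDen] using congrArg (eval ![a, b, c, d]) h
  have h₃ : r.2.2 = r'.2.2 := by linear_combination -heval 0 0 0 0
  have h₂ : r.2.1 = r'.2.1 := by linear_combination -heval 0 1 0 0 - h₃
  have h₁ : r.1 = r'.1 := by linear_combination -heval 0 0 0 1 - h₃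
  exact Prod.ext h₁ (Prod.ext h₂ h₃)

/-- The field of rational functions in the four coefficients of the generic shear. -/
abbrev ShearField (F : Type*) [Field F] : Type _ := FractionRing (MvPolynomial (Fin 4) F)

lemma algebraMap_shearField_injective :
    Function.Injective (algebraMap (MvPolynomial (Fin 4) F) (ShearField F)) :=
  IsFractionRing.injective _ _

instance : Infinite (ShearField F) := Infinite.of_injective _ algebraMap_shearField_injective

instance {p : ℕ} [CharP F p] : CharP (ShearField F) p :=
  charP_of_injective_ringHom algebraMap_shearField_injective p

/-- The image of `xLine q` under the generic shear. -/
def genericX (q : F × F × F) : ShearField F × ShearField F × ShearField F :=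
  (algebraMap _ _ (xNum q) / algebraMap _ _ (xDen q),
    algebraMap _ _ (C q.2.2 : MvPolynomial (Fin 4) F) / algebraMap _ _ (xDen q),
    -1 / algebraMap _ _ (xDen q))

/-- The image of `yLine r` under the generic shear. -/
def genericY (r : F × F × F) : ShearField F × ShearField F × ShearField F :=
  (algebraMap _ _ (yNum r) / algebraMap _ _ (yDen r),
    -algebraMap _ _ (C r.2.1 : MvPolynomial (Fin 4) F) / algebraMap _ _ (yDen r),
    algebraMap _ _ (C r.1 : MvPolynomial (Fin 4) F) / algebraMap _ _ (yDen r))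

lemma algebraMap_xDen_ne_zero (q : F × F × F) : algebraMap _ (ShearField F) (xDen q) ≠ 0 :=
  (map_ne_zero_iff _ algebraMap_shearField_injective).2 (xDen_ne_zero q)

lemma algebraMap_yDen_ne_zero {r : F × F × F} (hr : r.2.1 ≠ 0) :
    algebraMap _ (ShearField F) (yDen r) ≠ 0 :=
  (map_ne_zero_iff _ algebraMap_shearField_injective).2 (yDen_ne_zero hr)

lemma eq_of_genericX_fst_eq {q q' : F × F × F} (h : (genericX q).1 = (genericX q').1) :
    q = q' := by
  unfold genericX at h
  rw [div_eq_div_iff (algebraMap_xDen_ne_zero q) (algebraMap_xDen_ne_zero q'), ← map_mul,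
    ← map_mul] at h
  exact eq_of_xNum_mul_xDen_eq (algebraMap_shearField_injective h)

lemma eq_of_genericY_fst_eq {r r' : F × F × F} (hr : r.2.1 ≠ 0) (hr' : r'.2.1 ≠ 0)
    (h : (genericY r).1 = (genericY r').1) : r = r' := by
  unfold genericY at h
  rw [div_eq_div_iff (algebraMap_yDen_ne_zero hr) (algebraMap_yDen_ne_zero hr'), ← map_mul,
    ← map_mul] at h
  exact eq_of_yNum_mul_yDen_eq (algebraMap_shearField_injective h)

lemma linesMeet_genericX_genericY {q r : F × F × F} (hr : r.2.1 ≠ 0) :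
    LinesMeet (genericX q) (genericY r) ↔ LinesMeet q r := by
  have hform : xNum q * C r.2.1 + xDen q * C r.1 - C q.2.2 * yNum r - yDen r =
      C (q.1 * r.2.1 + q.2.1 * r.1 - q.2.2 - r.2.2) := by
    simp only [xNum, xDen, yNum, yDen, C_add, C_sub, C_mul]
    ring
  have hleft : LinesMeet (genericX q) (genericY r) ↔ algebraMap _ (ShearField F)
      (xNum q * C r.2.1 + xDen q * C r.1 - C q.2.2 * yNum r - yDen r) = 0 := by
    have := algebraMap_xDen_ne_zero q
    have := algebraMap_yDen_ne_zero hr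
    simp only [LinesMeet, genericX, genericY, map_add, map_sub, map_mul]
    field_simp
    constructor <;> intro h <;> linear_combination h
  rw [hleft, hform, map_eq_zero_iff _ algebraMap_shearField_injective, C_eq_zero]
  unfold LinesMeet
  constructor <;> intro h <;> linear_combination -h

variable [DecidableEq F]

theorem card_interedges_linesMeet_le {p s : ℕ} [CharP F p] {A B : Finset (F × F × F)}
    (h : CodegreeLE LinesMeet s A B) (hne : ∀ r ∈ B, r.2.1 ≠ 0) {ν : ℝ} (hs : s ≤ ν)
    (hνp : ν ≤ p) (hA : √(#A : ℝ) ≤ ν) (hB : √(#B : ℝ) ≤ ν) :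
    (#(Rel.interedges LinesMeet A B) : ℝ) ≤ 10000 * (ν * √(#A : ℝ) * √(#B : ℝ)) := by
  have : DecidableEq (ShearField F) := Classical.decEq _
  have hmeet : ∀ q ∈ A, ∀ r ∈ B, LinesMeet (genericX q) (genericY r) ↔ LinesMeet q r :=
    fun q _ r hr => linesMeet_genericX_genericY (hne r hr)
  have hinjX : Set.InjOn genericX (A : Set (F × F × F)) :=
    fun q _ q' _ h => eq_of_genericX_fst_eq (congrArg Prod.fst h)
  have hinjY : Set.InjOn genericY (B : Set (F × F × F)) :=
    fun r hr r' hr' h => eq_of_genericY_fst_eq (hne r hr) (hne r' hr') (congrArg Prod.fst h)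
  have hcardA := card_image_of_injOn hinjX
  have hcardB := card_image_of_injOn hinjY
  have hfamilies : LineFamilies s (A.image genericX) (B.image genericY) := by
    refine ⟨?_, ?_, h.image fun q hq r hr => (hmeet q hq r hr).1⟩
    · rw [coe_image]
      rintro _ ⟨q, -, rfl⟩ _ ⟨q', -, rfl⟩ h
      rw [eq_of_genericX_fst_eq h]
    · rw [coe_image]
      rintro _ ⟨r, hr, rfl⟩ _ ⟨r', hr', rfl⟩ h
      rw [eq_of_genericY_fst_eq (hne r hr) (hne r' hr') h]
  have hle := hfamilies.card_interedges_le (p := p) hs hνp (by rwa [hcardA]) (by rwa [hcardB])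
  rw [hcardA, hcardB] at hle
  have himage := card_interedges_le_card_interedges_image hinjX hinjY
    (fun q hq r hr => (hmeet q hq r hr).2)
  exact le_trans (by exact_mod_cast himage) hle

end GenericCoordinates

section InvariantSets

variable {F : Type*} [Field F]

/-- The finite set `G` consists of the elements of a multiplicative subgroup of the field `F`. -/
structure IsMulSubgroup (G : Finset F) : Prop where
  one_mem : 1 ∈ G
  zero_notMem : 0 ∉ G
  mul_mem : ∀ a ∈ G, ∀ b ∈ G, a * b ∈ G
  inv_mem : ∀ a ∈ G, a⁻¹ ∈ G

lemma isMulSubgroup_of_coe_eq_image {G : Finset F} {H : Subgroup Fˣ}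
    (hG : (G : Set F) = (fun u : Fˣ => (u : F)) '' (H : Set Fˣ)) : IsMulSubgroup G := by
  have hmem (x : F) : x ∈ G ↔ ∃ u ∈ H, (u : F) = x := by
    rw [← mem_coe, hG]
    rfl
  refine ⟨(hmem 1).2 ⟨1, H.one_mem, rfl⟩, fun h0 => ?_, fun a ha b hb => ?_, fun a ha => ?_⟩
  · obtain ⟨u, -, hu⟩ := (hmem 0).1 h0
    exact u.ne_zero hu
  · obtain ⟨u, hu, rfl⟩ := (hmem a).1 ha
    obtain ⟨v, hv, rfl⟩ := (hmem b).1 hb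
    exact (hmem _).2 ⟨u * v, H.mul_mem hu hv, Units.val_mul u v⟩
  · obtain ⟨u, hu, rfl⟩ := (hmem a).1 ha
    exact (hmem _).2 ⟨u⁻¹, H.inv_mem hu, Units.val_inv_eq_inv_val u⟩

lemma IsMulSubgroup.one_le_card {G : Finset F} (hG : IsMulSubgroup G) : (1 : ℝ) ≤ #G := by
  exact_mod_cast card_pos.2 ⟨1, hG.one_mem⟩

lemma card_le_card_of_forall_mul_mem {G P : Finset F} {x : F} (hx : x ≠ 0)
    (hP : ∀ g ∈ G, g * x ∈ P) : #G ≤ #P :=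
  card_le_card_of_injOn (· * x) hP fun _ _ _ _ h => mul_right_cancel₀ hx h

variable [DecidableEq F]

lemma card_filter_linesMeet_le {G P : Finset F} (hGP : #G ≤ #P) {r r' : F × F × F}
    (hne : r ≠ r') : #{q ∈ P ×ˢ G ×ˢ P | LinesMeet q r ∧ LinesMeet q r'} ≤ #P := by
  have hmem {q : F × F × F} (hq : q ∈ ({q ∈ P ×ˢ G ×ˢ P | LinesMeet q r ∧ LinesMeet q r'} :
      Finset (F × F × F))) : (q.1 ∈ P ∧ q.2.1 ∈ G) ∧ LinesMeet q r ∧ LinesMeet q r' := by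
    simp only [mem_filter, mem_product] at hq
    exact ⟨⟨hq.1.1, hq.1.2.1⟩, hq.2⟩
  unfold LinesMeet at hmem
  by_cases h₁ : r.1 = r'.1
  · by_cases h₂ : r.2.1 = r'.2.1
    · rw [filter_false_of_mem fun q hq hmeet => ?_, card_empty]
      · exact Nat.zero_le _
      obtain ⟨-, h, h'⟩ := hmem (mem_filter.2 ⟨hq, hmeet⟩)
      exact hne <| Prod.ext h₁ (Prod.ext h₂ (by
        rw [← h₁, ← h₂] at h'
        linear_combination h - h'))
    · refine (card_le_card_of_injOn (fun q => q.2.1) (fun q hq => (hmem hq).1.2) ?_).trans hGP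
      intro q hq q' hq' hqq'
      obtain ⟨-, h, h'⟩ := hmem hq
      obtain ⟨-, k, k'⟩ := hmem hq'
      have hfst : q.1 = q'.1 := mul_left_cancel₀ (sub_ne_zero.2 h₂) (by grind)
      exact Prod.ext hfst (Prod.ext hqq' (by grind))
  · refine card_le_card_of_injOn Prod.fst (fun q hq => (hmem hq).1.1) ?_
    intro q hq q' hq' hqq'
    obtain ⟨-, h, h'⟩ := hmem hq
    obtain ⟨-, k, k'⟩ := hmem hq'
    have hsnd : q.2.1 = q'.2.1 := mul_left_cancel₀ (sub_ne_zero.2 h₁) (by grind)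
    exact Prod.ext hqq' (Prod.ext hsnd (by grind))

lemma codegreeLE_linesMeet_product {G P : Finset F} (hGP : #G ≤ #P) :
    CodegreeLE LinesMeet #P (P ×ˢ G ×ˢ P) (P ×ˢ G ×ˢ P) where
  left q _ q' _ hne := by
    simp only [linesMeet_comm (q := q), linesMeet_comm (q := q')]
    exact card_filter_linesMeet_le hGP hne
  right _ _ _ _ hne := card_filter_linesMeet_le hGP hne

/- A solution of `x₁ + y₁ = x₂ + y₂` in `P` and `γ δ ∈ G` give the pair of meeting lines
`(γ⁻¹ * x₁, δ, x₂)` and `(δ⁻¹ * y₁, γ, y₂)`. -/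
lemma card_sq_mul_addEnergy_le {G P : Finset F} (hG : IsMulSubgroup G)
    (hP : ∀ g ∈ G, ∀ x ∈ P, g * x ∈ P) :
    #G ^ 2 * addEnergy P P ≤ #(Rel.interedges LinesMeet (P ×ˢ G ×ˢ P) (P ×ˢ G ×ˢ P)) := by
  have hne {g : F} (hg : g ∈ G) : g ≠ 0 := fun h0 => hG.zero_notMem (h0 ▸ hg)
  rw [addEnergy, sq, ← card_product, ← card_product]
  refine card_le_card_of_injOn (fun z => ((z.1.1⁻¹ * z.2.1.1, z.1.2, z.2.1.2),
    (z.1.2⁻¹ * z.2.2.1, z.1.1, z.2.2.2))) ?_ ?_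
  · rintro ⟨⟨γ, δ⟩, ⟨x₁, x₂⟩, y₁, y₂⟩ hz
    simp only [coe_product, Set.mem_prod, mem_coe, mem_filter, mem_product] at hz
    obtain ⟨⟨hγ, hδ⟩, ⟨⟨hx₁, hx₂⟩, hy₁, hy₂⟩, hadd⟩ := hz
    simp only [mem_coe, Rel.mem_interedges_iff, mem_product, LinesMeet]
    rw [mul_inv_cancel_left₀ (hne hδ), mul_inv_cancel_left₀ (hne hγ)]
    exact ⟨⟨hP _ (hG.inv_mem _ hγ) _ hx₁, hδ, hx₂⟩, ⟨hP _ (hG.inv_mem _ hδ) _ hy₁, hγ, hy₂⟩,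
      by linear_combination -hadd⟩
  · rintro ⟨⟨γ, δ⟩, ⟨x₁, x₂⟩, y₁, y₂⟩ hz ⟨⟨γ', δ'⟩, ⟨x₁', x₂'⟩, y₁', y₂'⟩ - h
    simp only [coe_product, Set.mem_prod, mem_coe] at hz
    simp only [Prod.mk.injEq] at h
    obtain ⟨⟨hx, rfl, rfl⟩, hy, rfl, rfl⟩ := h
    rw [mul_left_cancel₀ (inv_ne_zero (hne hz.1.1)) hx,
      mul_left_cancel₀ (inv_ne_zero (hne hz.1.2)) hy]

theorem addEnergy_mul_sqrt_card_le {p : ℕ} [CharP F p] {G P : Finset F} (hG : IsMulSubgroup G)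
    (hP : ∀ g ∈ G, ∀ x ∈ P, g * x ∈ P) (hGP : #G ≤ #P) (hp : #P * √(#G : ℝ) ≤ p) :
    addEnergy P P * √(#G : ℝ) ≤ 10000 * (#P : ℝ) ^ 3 := by
  have hsqrt_one : 1 ≤ √(#G : ℝ) := Real.one_le_sqrt.2 hG.one_le_card
  have hsqrt_sq : √(#G : ℝ) ^ 2 = #G := Real.sq_sqrt (Nat.cast_nonneg _)
  have hcard : √(#(P ×ˢ G ×ˢ P) : ℝ) = #P * √(#G : ℝ) := by
    rw [Real.sqrt_eq_iff_mul_self_eq (by positivity) (by positivity), card_product, card_product]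
    push_cast
    linear_combination -(#P : ℝ) ^ 2 * hsqrt_sq
  have hupper := card_interedges_linesMeet_le (codegreeLE_linesMeet_product hGP)
    (fun r hr h0 => hG.zero_notMem (h0 ▸ (mem_product.1 (mem_product.1 hr).2).1))
    (ν := #P * √(#G : ℝ)) (le_mul_of_one_le_right (by positivity) hsqrt_one) hp hcard.le hcard.le
  have hlower : (#G ^ 2 * addEnergy P P : ℝ) ≤
      #(Rel.interedges LinesMeet (P ×ˢ G ×ˢ P) (P ×ˢ G ×ˢ P)) := by
    exact_mod_cast card_sq_mul_addEnergy_le hG hP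
  rw [hcard] at hupper
  refine le_of_mul_le_mul_left (a := √(#G : ℝ) ^ 3) ?_ (by positivity)
  calc √(#G : ℝ) ^ 3 * (addEnergy P P * √(#G : ℝ)) = (√(#G : ℝ) ^ 2) ^ 2 * addEnergy P P := by ring
    _ = (#G : ℝ) ^ 2 * addEnergy P P := by rw [hsqrt_sq]
    _ ≤ 10000 * (#P * √(#G : ℝ) * (#P * √(#G : ℝ)) * (#P * √(#G : ℝ))) := hlower.trans hupper
    _ = √(#G : ℝ) ^ 3 * (10000 * (#P : ℝ) ^ 3) := by ring

end InvariantSets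

section WeightedEnergy

variable {X : Type*} [AddCommGroup X] [Fintype X]

/-- The convolution of two real functions on a finite abelian group, without normalization. -/
def addConv (f g : X → ℝ) (t : X) : ℝ := ∑ x, f x * g (t - x)

/-- The additive energy of a weight: the sum of `f x * f y * f z * f w` over the solutions of
`x + y = z + w`. -/
def weightedEnergy (f : X → ℝ) : ℝ := ∑ t, addConv f f t ^ 2

lemma sum_sub_left (f : X → ℝ) (c : X) : ∑ x, f (c - x) = ∑ x, f x :=
  Equiv.sum_comp (Equiv.subLeft c) f

lemma sum_sub_right (f : X → ℝ) (c : X) : ∑ x, f (x - c) = ∑ x, f x :=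
  Equiv.sum_comp (Equiv.subRight c) f

lemma sum_add_left (f : X → ℝ) (c : X) : ∑ x, f (c + x) = ∑ x, f x :=
  Equiv.sum_comp (Equiv.addLeft c) f

lemma sum_addConv (f g : X → ℝ) : ∑ t, addConv f g t = (∑ x, f x) * ∑ x, g x := by
  unfold addConv
  rw [sum_comm, sum_mul]
  exact sum_congr rfl fun x _ => by rw [← mul_sum, sum_sub_right]

lemma sum_addConv_sq (f g : X → ℝ) :
    ∑ t, addConv f g t ^ 2 = ∑ d, (∑ x, f x * f (x + d)) * ∑ y, g y * g (y + d) := by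
  have hshift (x d : X) : ∑ t, g (t - x) * g (t - (x + d)) = ∑ y, g y * g (y + d) := by
    rw [← sum_sub_right (fun y => g y * g (y + d)) (x + d)]
    exact sum_congr rfl fun t _ => by rw [mul_comm, sub_add_eq_sub_sub, sub_add_cancel]
  calc ∑ t, addConv f g t ^ 2
      = ∑ t, ∑ x, ∑ d, f x * f (x + d) * (g (t - x) * g (t - (x + d))) := by
        refine sum_congr rfl fun t _ => ?_
        rw [addConv, sq, sum_mul_sum]
        refine sum_congr rfl fun x _ => ?_
        rw [← sum_add_left _ x]
        exact sum_congr rfl fun d _ => by ring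
    _ = ∑ x, ∑ d, f x * f (x + d) * ∑ t, g (t - x) * g (t - (x + d)) := by
        simp only [mul_sum]
        rw [sum_comm]
        exact sum_congr rfl fun x _ => sum_comm
    _ = ∑ d, (∑ x, f x * f (x + d)) * ∑ y, g y * g (y + d) := by
        simp only [hshift, sum_mul]
        exact sum_comm

lemma sum_addConv_sq_le (f g : X → ℝ) :
    ∑ t, addConv f g t ^ 2 ≤ (weightedEnergy f + weightedEnergy g) / 2 := by
  unfold weightedEnergy
  rw [sum_addConv_sq, sum_addConv_sq f f, sum_addConv_sq g g, ← sum_add_distrib, sum_div]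
  refine sum_le_sum fun d _ => ?_
  linarith [two_mul_le_add_sq (∑ x, f x * f (x + d)) (∑ y, g y * g (y + d))]

lemma addConv_sum_sum {ι : Type*} (I : Finset ι) (f : ι → X → ℝ) (t : X) :
    addConv (fun x => ∑ i ∈ I, f i x) (fun x => ∑ i ∈ I, f i x) t =
      ∑ ij ∈ I ×ˢ I, addConv (f ij.1) (f ij.2) t := by
  unfold addConv
  rw [sum_comm]
  exact sum_congr rfl fun x _ => by rw [sum_mul_sum, sum_product]

lemma weightedEnergy_sum_le {ι : Type*} {I : Finset ι} {f : ι → X → ℝ} {c : ℝ}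
    (hc : ∀ i ∈ I, weightedEnergy (f i) ≤ c) :
    weightedEnergy (fun x => ∑ i ∈ I, f i x) ≤ #I ^ 4 * c := by
  simp only [weightedEnergy, addConv_sum_sum]
  calc ∑ t, (∑ ij ∈ I ×ˢ I, addConv (f ij.1) (f ij.2) t) ^ 2
      ≤ ∑ t, #(I ×ˢ I) * ∑ ij ∈ I ×ˢ I, addConv (f ij.1) (f ij.2) t ^ 2 :=
        sum_le_sum fun t _ => sq_sum_le_card_mul_sum_sq
    _ = #(I ×ˢ I) * ∑ ij ∈ I ×ˢ I, ∑ t, addConv (f ij.1) (f ij.2) t ^ 2 := by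
        rw [← mul_sum, sum_comm]
    _ ≤ #(I ×ˢ I) * ∑ _ ∈ I ×ˢ I, c := by
        gcongr with _ hij
        rw [mem_product] at hij
        exact (sum_addConv_sq_le _ _).trans (by linarith [hc _ hij.1, hc _ hij.2])
    _ = #I ^ 4 * c := by
        rw [sum_const, nsmul_eq_mul, card_product]
        push_cast
        ring

lemma weightedEnergy_mono {f g : X → ℝ} (hf : ∀ x, 0 ≤ f x) (hfg : ∀ x, f x ≤ g x) :
    weightedEnergy f ≤ weightedEnergy g :=
  sum_le_sum fun _ _ => pow_le_pow_left₀ (sum_nonneg fun x _ => mul_nonneg (hf x) (hf _))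
    (sum_le_sum fun x _ => mul_le_mul (hfg x) (hfg _) (hf _) ((hf x).trans (hfg x))) 2

lemma weightedEnergy_ite_mem [DecidableEq X] (P : Finset X) (c : ℝ) :
    weightedEnergy (fun x => if x ∈ P then c else 0) = c ^ 4 * addEnergy P P := by
  rw [addEnergy_eq_sum_sq, weightedEnergy, Nat.cast_sum, mul_sum]
  refine sum_congr rfl fun t _ => ?_
  have hconv : addConv (fun x => if x ∈ P then c else 0) (fun x => if x ∈ P then c else 0) t =
      ∑ x, if x ∈ P ∧ t - x ∈ P then c ^ 2 else 0 :=
    sum_congr rfl fun x _ => by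
      by_cases hx : x ∈ P <;> by_cases hy : t - x ∈ P <;> simp [hx, hy, sq]
  have hcard : #{x | x ∈ P ∧ t - x ∈ P} = #{xy ∈ P ×ˢ P | xy.1 + xy.2 = t} := by
    have hright (xy : X × X) (hxy : xy ∈ ({xy ∈ P ×ˢ P | xy.1 + xy.2 = t} : Finset _)) :
        t - xy.1 = xy.2 := sub_eq_of_eq_add' (mem_filter.1 hxy).2.symm
    refine card_bij' (fun x _ => (x, t - x)) (fun xy _ => xy.1) (by simp) (fun xy hxy => ?_)
      (by simp) (fun xy hxy => Prod.ext rfl (hright xy hxy))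
    rw [mem_filter, hright xy hxy]
    exact ⟨mem_univ _, mem_product.1 (mem_filter.1 hxy).1⟩
  rw [hconv, ← sum_filter, sum_const, nsmul_eq_mul, hcard, Nat.cast_pow]
  ring

section Centering

variable (f : X → ℝ)

lemma sum_sub_mean : ∑ x, (f x - (∑ y, f y) / Fintype.card X) = 0 := by
  rw [sum_sub_distrib, sum_const, card_univ, nsmul_eq_mul, mul_div_cancel₀ _
    (Nat.cast_ne_zero.2 Fintype.card_ne_zero), sub_self]

lemma sum_sub_mean_sq : ∑ x, (f x - (∑ y, f y) / Fintype.card X) ^ 2 =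
    ∑ x, f x ^ 2 - (∑ x, f x) ^ 2 / Fintype.card X := by
  have hcard : (Fintype.card X : ℝ) ≠ 0 := Nat.cast_ne_zero.2 Fintype.card_ne_zero
  simp only [sub_sq, sum_add_distrib, sum_sub_distrib, ← sum_mul, ← mul_sum, sum_const, card_univ,
    nsmul_eq_mul]
  field_simp
  ring

lemma sum_sq_sub_sq_sum_div_card_nonneg :
    0 ≤ ∑ x, f x ^ 2 - (∑ x, f x) ^ 2 / Fintype.card X := by
  rw [← sum_sub_mean_sq]
  exact sum_nonneg fun x _ => sq_nonneg _

lemma addConv_sub_mean (t : X) : addConv (fun x => f x - (∑ y, f y) / Fintype.card X)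
    (fun x => f x - (∑ y, f y) / Fintype.card X) t =
      addConv f f t - (∑ x, f x) ^ 2 / Fintype.card X := by
  have hcard : (Fintype.card X : ℝ) ≠ 0 := Nat.cast_ne_zero.2 Fintype.card_ne_zero
  simp only [addConv, sub_mul, mul_sub, sum_sub_distrib, ← sum_mul, ← mul_sum, sum_const,
    card_univ, nsmul_eq_mul, sum_sub_left]
  field_simp
  ring

lemma weightedEnergy_sub_mean : weightedEnergy (fun x => f x - (∑ y, f y) / Fintype.card X) =
    weightedEnergy f - (∑ x, f x) ^ 4 / Fintype.card X := by
  have hcard : (Fintype.card X : ℝ) ≠ 0 := Nat.cast_ne_zero.2 Fintype.card_ne_zero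
  simp only [weightedEnergy, addConv_sub_mean, sub_sq, sum_add_distrib, sum_sub_distrib, ← sum_mul,
    ← mul_sum, sum_addConv, sum_const, card_univ, nsmul_eq_mul]
  field_simp
  ring

end Centering

end WeightedEnergy

section InvariantWeights

variable {F : Type*} [Field F] [Fintype F]

lemma sum_sum_dilate_mul_dilate [DecidableEq F] {g : F → ℝ} (hg : ∑ x, g x = 0) (y y' : F) :
    ∑ s, ∑ b, g (b - s * y) * g (b - s * y') =
      if y = y' then Fintype.card F * ∑ x, g x ^ 2 else 0 := by
  split_ifs with hy
  · subst hy
    have (s : F) : ∑ b, g (b - s * y) * g (b - s * y) = ∑ x, g x ^ 2 := by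
      simp only [← sq]
      exact sum_sub_right (fun x => g x ^ 2) (s * y)
    simp only [this, sum_const, card_univ, nsmul_eq_mul]
  · have (s : F) : ∑ b, g (b - s * y) * g (b - s * y') = ∑ b, g b * g (b + (y - y') * s) := by
      rw [← sum_sub_right (fun b => g b * g (b + (y - y') * s)) (s * y)]
      exact sum_congr rfl fun b _ => by ring_nf
    simp only [this]
    rw [sum_comm]
    refine sum_eq_zero fun b _ => ?_
    have hdilate : ∑ s, g (b + (y - y') * s) = ∑ x, g (b + x) :=
      Equiv.sum_comp (Equiv.mulLeft₀ (y - y') (sub_ne_zero.2 hy)) fun x => g (b + x)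
    rw [← mul_sum, hdilate, sum_add_left, hg, mul_zero]

lemma sum_sum_dilate_conv_sq (f : F → ℝ) {g : F → ℝ} (hg : ∑ x, g x = 0) :
    ∑ s, ∑ b, (∑ y, f y * g (b - s * y)) ^ 2 =
      Fintype.card F * ((∑ x, f x ^ 2) * ∑ x, g x ^ 2) := by
  classical
  calc ∑ s, ∑ b, (∑ y, f y * g (b - s * y)) ^ 2
      = ∑ s, ∑ b, ∑ y, ∑ y', f y * f y' * (g (b - s * y) * g (b - s * y')) := by
        refine sum_congr rfl fun s _ => sum_congr rfl fun b _ => ?_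
        rw [sq, sum_mul_sum]
        exact sum_congr rfl fun y _ => sum_congr rfl fun y' _ => by ring
    _ = ∑ y, ∑ y', f y * f y' * ∑ s, ∑ b, g (b - s * y) * g (b - s * y') := by
        simp only [mul_sum]
        rw [sum_congr rfl fun s _ => sum_comm, sum_comm]
        refine sum_congr rfl fun y _ => ?_
        rw [sum_congr rfl fun s _ => sum_comm, sum_comm]
    _ = Fintype.card F * ((∑ x, f x ^ 2) * ∑ x, g x ^ 2) := by
        simp only [sum_sum_dilate_mul_dilate hg, mul_ite, mul_zero, sum_ite_eq, mem_univ, if_true,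
          ← sum_mul, sq]
        ring

/- For a `G`-invariant weight, convolving with a dilate by an element of `G` is the same as
convolving; positivity then allows the dilation factor to run over the whole field. -/
lemma card_mul_weightedEnergy_le_of_sum_eq_zero {G : Finset F} (hG : 0 ∉ G) {f : F → ℝ}
    (hf : ∀ g ∈ G, ∀ x, f (g * x) = f x) (hsum : ∑ x, f x = 0) :
    #G * weightedEnergy f ≤ Fintype.card F * (∑ x, f x ^ 2) ^ 2 := by
  have hconv : ∀ s ∈ G, ∀ b, ∑ y, f y * f (b - s * y) = addConv f f b := fun s hs b => by
    have hs0 : s ≠ 0 := fun h0 => hG (h0 ▸ hs)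
    rw [addConv, ← Equiv.sum_comp (Equiv.mulLeft₀ s hs0) fun y => f y * f (b - y)]
    exact sum_congr rfl fun y _ => by rw [Equiv.mulLeft₀_apply, hf s hs]
  calc #G * weightedEnergy f = ∑ s ∈ G, ∑ b, (∑ y, f y * f (b - s * y)) ^ 2 := by
        rw [sum_congr rfl fun s hs => sum_congr rfl fun b _ => by rw [hconv s hs b], sum_const,
          nsmul_eq_mul, weightedEnergy]
    _ ≤ ∑ s, ∑ b, (∑ y, f y * f (b - s * y)) ^ 2 :=
        sum_le_sum_of_subset_of_nonneg (subset_univ _) fun s _ _ => by positivity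
    _ = Fintype.card F * (∑ x, f x ^ 2) ^ 2 := by rw [sum_sum_dilate_conv_sq f hsum, ← sq]

lemma card_mul_weightedEnergy_sub_le {G : Finset F} (hG : 0 ∉ G) {f : F → ℝ}
    (hf : ∀ g ∈ G, ∀ x, f (g * x) = f x) :
    #G * (weightedEnergy f - (∑ x, f x) ^ 4 / Fintype.card F) ≤
      Fintype.card F * (∑ x, f x ^ 2 - (∑ x, f x) ^ 2 / Fintype.card F) ^ 2 := by
  rw [← weightedEnergy_sub_mean, ← sum_sub_mean_sq]
  exact card_mul_weightedEnergy_le_of_sum_eq_zero hG (fun g hg x => by rw [hf g hg])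
    (sum_sub_mean f)

end InvariantWeights

section DyadicDecomposition

variable {X : Type*}

/-- The weight `r` restricted to the points where it is less than `D`. -/
def lowPart (r : X → ℝ) (D : ℝ) (x : X) : ℝ := if r x < D then r x else 0

/-- The weight `r` restricted to the points where `D ≤ r < 2 * D`. -/
def dyadicLevel (r : X → ℝ) (D : ℝ) (x : X) : ℝ := if D ≤ r x ∧ r x < 2 * D then r x else 0

/-- The dyadic decomposition of the weight `r` starting from the threshold `D`: part `0` is where
`r < D`, and part `i + 1` is where `2 ^ i * D ≤ r < 2 ^ (i + 1) * D`. -/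
def dyadicPart (r : X → ℝ) (D : ℝ) : ℕ → X → ℝ
  | 0 => lowPart r D
  | i + 1 => dyadicLevel r (2 ^ i * D)

variable {r : X → ℝ} {D : ℝ}

lemma lowPart_add_dyadicLevel (hD : 0 ≤ D) (x : X) :
    lowPart r D x + dyadicLevel r D x = lowPart r (2 * D) x := by
  unfold lowPart dyadicLevel
  grind

lemma sum_dyadicPart (hD : 0 ≤ D) (L : ℕ) (x : X) :
    ∑ i ∈ range (L + 1), dyadicPart r D i x = lowPart r (2 ^ L * D) x := by
  induction L with
  | zero => simp [dyadicPart]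
  | succ L ih =>
    rw [sum_range_succ, ih, dyadicPart, lowPart_add_dyadicLevel (by positivity), pow_succ',
      mul_assoc]

lemma lowPart_nonneg (hr : ∀ x, 0 ≤ r x) (x : X) : 0 ≤ lowPart r D x := by
  unfold lowPart
  split_ifs
  exacts [hr x, le_rfl]

lemma lowPart_le (hr : ∀ x, 0 ≤ r x) (x : X) : lowPart r D x ≤ r x := by
  unfold lowPart
  split_ifs
  exacts [le_rfl, hr x]

lemma lowPart_sq_le (hr : ∀ x, 0 ≤ r x) (hD : 0 ≤ D) (x : X) :
    lowPart r D x ^ 2 ≤ D * r x := by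
  unfold lowPart
  split_ifs with h
  · rw [sq]
    exact mul_le_mul_of_nonneg_right h.le (hr x)
  · rw [zero_pow two_ne_zero]
    exact mul_nonneg hD (hr x)

variable [Fintype X]

variable (r D) in
/-- The support of `dyadicLevel r D`, for positive `D`. -/
def dyadicSet : Finset X := {x | D ≤ r x ∧ r x < 2 * D}

lemma mem_dyadicSet {x : X} : x ∈ dyadicSet r D ↔ D ≤ r x ∧ r x < 2 * D := by
  rw [dyadicSet, mem_filter, and_iff_right (mem_univ x)]

lemma card_dyadicSet_mul_le (hr : ∀ x, 0 ≤ r x) : #(dyadicSet r D) * D ≤ ∑ x, r x := by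
  rw [← nsmul_eq_mul]
  exact (card_nsmul_le_sum _ _ _ fun x hx => (mem_dyadicSet.1 hx).1).trans
    (sum_le_univ_sum_of_nonneg hr)

lemma card_dyadicSet_mul_sq_le (hD : 0 ≤ D) : #(dyadicSet r D) * D ^ 2 ≤ ∑ x, r x ^ 2 := by
  rw [← nsmul_eq_mul]
  exact (card_nsmul_le_sum _ _ _ fun x hx => pow_le_pow_left₀ hD (mem_dyadicSet.1 hx).1 2).trans
    (sum_le_univ_sum_of_nonneg fun x => sq_nonneg (r x))

lemma card_dyadicSet_mul_mul_le {c M : ℝ} (hc : 0 ≤ c) (hM : 0 ≤ M) (hmax : ∀ x, r x * c ≤ M)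
    (hcard : #(dyadicSet r D) ≤ 1) : #(dyadicSet r D) * (D * c) ≤ M := by
  rcases (dyadicSet r D).eq_empty_or_nonempty with hempty | ⟨x, hx⟩
  · rwa [hempty, card_empty, Nat.cast_zero, zero_mul]
  · rw [le_antisymm hcard (card_pos.2 ⟨x, hx⟩), Nat.cast_one, one_mul]
    exact (mul_le_mul_of_nonneg_right (mem_dyadicSet.1 hx).1 hc).trans (hmax x)

lemma weightedEnergy_dyadicLevel_le [AddCommGroup X] [DecidableEq X] (hr : ∀ x, 0 ≤ r x) :
    weightedEnergy (dyadicLevel r D) ≤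
      (2 * D) ^ 4 * addEnergy (dyadicSet r D) (dyadicSet r D) := by
  rw [← weightedEnergy_ite_mem]
  simp only [mem_dyadicSet]
  refine weightedEnergy_mono (fun x => ?_) (fun x => ?_) <;> unfold dyadicLevel <;> split_ifs with h
  exacts [hr x, le_rfl, h.2.le, le_rfl]

end DyadicDecomposition

section LevelEnergy

lemma addEnergy_le_card_pow_four {X : Type*} [Add X] [DecidableEq X] (P : Finset X) :
    addEnergy P P ≤ #P ^ 4 := by
  refine (card_filter_le _ _).trans_eq ?_
  simp only [card_product]
  ring

variable {F : Type*} [Field F] [Fintype F] {G : Finset F} {r : F → ℝ} {M D : ℝ}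

lemma card_dyadicSet_le_one_or (hr : ∀ g ∈ G, ∀ x, r (g * x) = r x) :
    #(dyadicSet r D) ≤ 1 ∨ #G ≤ #(dyadicSet r D) := by
  by_cases hne : ∃ x ∈ dyadicSet r D, x ≠ 0
  · obtain ⟨x, hx, hx0⟩ := hne
    refine .inr (card_le_card_of_forall_mul_mem hx0 fun g hg => ?_)
    rwa [mem_dyadicSet, hr g hg, ← mem_dyadicSet]
  · push Not at hne
    exact .inl (card_le_one.2 fun x hx y hy => (hne x hx).trans (hne y hy).symm)

lemma weightedEnergy_dyadicLevel_mul_sqrt_le_of_card_le_one (hG : IsMulSubgroup G)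
    (hr0 : ∀ x, 0 ≤ r x) (hM : ∑ x, r x = M) (hmax : ∀ x, r x * #G ≤ M) (hD : 0 ≤ D)
    (hcard : #(dyadicSet r D) ≤ 1) :
    weightedEnergy (dyadicLevel r D) * √(#G : ℝ) ≤ 16 * M ^ 2 * ∑ x, r x ^ 2 := by
  classical
  have henergy := weightedEnergy_dyadicLevel_le (D := D) hr0
  have hsum := (card_dyadicSet_mul_le (D := D) hr0).trans_eq hM
  have hsq := card_dyadicSet_mul_sq_le (r := r) hD
  have hM0 : 0 ≤ M := hM ▸ sum_nonneg fun x _ => hr0 x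
  have hpeak : #(dyadicSet r D) * (D * √(#G : ℝ)) ≤ M := by
    refine le_trans ?_ (card_dyadicSet_mul_mul_le (Nat.cast_nonneg _) hM0 hmax hcard)
    gcongr
    exact Real.sqrt_le_self_iff.2 (.inr hG.one_le_card)
  set P := dyadicSet r D
  have hcard' : (#P : ℝ) ≤ 1 := mod_cast hcard
  calc weightedEnergy (dyadicLevel r D) * √(#G : ℝ)
      ≤ (2 * D) ^ 4 * #P ^ 4 * √(#G : ℝ) := by
        gcongr
        exact henergy.trans (by gcongr; exact mod_cast addEnergy_le_card_pow_four P)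
    _ = 16 * (#P * D * (#P * (D * √(#G : ℝ)))) * (#P * D ^ 2) * #P := by ring
    _ ≤ 16 * (M * M) * (∑ x, r x ^ 2) * 1 := by gcongr
    _ = 16 * M ^ 2 * ∑ x, r x ^ 2 := by ring

lemma weightedEnergy_dyadicLevel_mul_sqrt_le_of_card_le {p : ℕ} [CharP F p] (hG : IsMulSubgroup G)
    (hr0 : ∀ x, 0 ≤ r x) (hr : ∀ g ∈ G, ∀ x, r (g * x) = r x) (hM : ∑ x, r x = M)
    (hD0 : 0 < D) (hD : M * √(#G : ℝ) ≤ D * p) (hcard : #G ≤ #(dyadicSet r D)) :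
    weightedEnergy (dyadicLevel r D) * √(#G : ℝ) ≤ 160000 * M ^ 2 * ∑ x, r x ^ 2 := by
  classical
  have henergy := weightedEnergy_dyadicLevel_le (D := D) hr0
  have hsum := (card_dyadicSet_mul_le (D := D) hr0).trans_eq hM
  have hsq := card_dyadicSet_mul_sq_le (r := r) hD0.le
  have hinvariant : ∀ g ∈ G, ∀ x ∈ dyadicSet r D, g * x ∈ dyadicSet r D := fun g hg x hx => by
    rwa [mem_dyadicSet, hr g hg, ← mem_dyadicSet]
  set P := dyadicSet r D
  have hsize : #P * √(#G : ℝ) ≤ p := by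
    refine le_of_mul_le_mul_left (le_trans ?_ hD) hD0
    rw [← mul_assoc, mul_comm D]
    gcongr
  have haddEnergy := addEnergy_mul_sqrt_card_le hG hinvariant hcard hsize
  calc weightedEnergy (dyadicLevel r D) * √(#G : ℝ)
      ≤ (2 * D) ^ 4 * addEnergy P P * √(#G : ℝ) := by gcongr
    _ = (2 * D) ^ 4 * (addEnergy P P * √(#G : ℝ)) := by ring
    _ ≤ (2 * D) ^ 4 * (10000 * #P ^ 3) := mul_le_mul_of_nonneg_left haddEnergy (by positivity)
    _ = 160000 * (#P * D) ^ 2 * (#P * D ^ 2) := by ring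
    _ ≤ 160000 * M ^ 2 * ∑ x, r x ^ 2 := by gcongr

lemma weightedEnergy_dyadicLevel_mul_sqrt_le {p : ℕ} [CharP F p] (hG : IsMulSubgroup G)
    (hr0 : ∀ x, 0 ≤ r x) (hr : ∀ g ∈ G, ∀ x, r (g * x) = r x) (hM : ∑ x, r x = M)
    (hmax : ∀ x, r x * #G ≤ M) (hD0 : 0 < D) (hD : M * √(#G : ℝ) ≤ D * p) :
    weightedEnergy (dyadicLevel r D) * √(#G : ℝ) ≤ 160000 * M ^ 2 * ∑ x, r x ^ 2 := by
  rcases card_dyadicSet_le_one_or (D := D) hr with hcard | hcard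
  · refine (weightedEnergy_dyadicLevel_mul_sqrt_le_of_card_le_one hG hr0 hM hmax hD0.le
      hcard).trans ?_
    gcongr
    norm_num
  · exact weightedEnergy_dyadicLevel_mul_sqrt_le_of_card_le hG hr0 hr hM hD0 hD hcard

lemma card_mul_weightedEnergy_lowPart_le (hG : 0 ∉ G) (hr0 : ∀ x, 0 ≤ r x)
    (hr : ∀ g ∈ G, ∀ x, r (g * x) = r x) (hM : ∑ x, r x = M) (hD : 0 ≤ D) :
    #G * weightedEnergy (lowPart r D) ≤
      #G * (M ^ 4 / Fintype.card F) + Fintype.card F * (D * M) ^ 2 := by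
  have hsum : ∑ x, lowPart r D x ≤ M := hM ▸ sum_le_sum fun x _ => lowPart_le hr0 x
  have hsum0 : 0 ≤ ∑ x, lowPart r D x := sum_nonneg fun x _ => lowPart_nonneg hr0 x
  have hsq : ∑ x, lowPart r D x ^ 2 ≤ D * M := by
    rw [← hM, mul_sum]
    exact sum_le_sum fun x _ => lowPart_sq_le hr0 hD x
  have hvar := sum_sq_sub_sq_sum_div_card_nonneg (lowPart r D)
  have henergy := card_mul_weightedEnergy_sub_le hG (f := lowPart r D) fun g hg x => by
    rw [lowPart, hr g hg, lowPart]
  rw [mul_sub, sub_le_iff_le_add'] at henergy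
  refine henergy.trans ?_
  gcongr
  exact (sub_le_self _ (by positivity)).trans hsq

end LevelEnergy

section EnergyIncrement

variable {p : ℕ} [Fact p.Prime] {G : Finset (ZMod p)} {r : ZMod p → ℝ} {M : ℝ}

lemma weightedEnergy_sub_mul_sqrt_le_of_le (hG : IsMulSubgroup G)
    (hr : ∀ g ∈ G, ∀ x, r (g * x) = r x) (hM : ∑ x, r x = M)
    (hle : (∑ x, r x ^ 2 - M ^ 2 / p) * p ≤ M ^ 2 * √(#G : ℝ)) :
    (weightedEnergy r - M ^ 4 / p) * √(#G : ℝ) ≤ M ^ 2 * (∑ x, r x ^ 2 - M ^ 2 / p) := by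
  have hvar := sum_sq_sub_sq_sum_div_card_nonneg r
  rw [hM, ZMod.card] at hvar
  have henergy := card_mul_weightedEnergy_sub_le hG.zero_notMem hr
  rw [hM, ZMod.card] at henergy
  set e := ∑ x, r x ^ 2 - M ^ 2 / p
  set q := √(#G : ℝ)
  have hq0 : 0 < q := Real.sqrt_pos.2 (by linarith [hG.one_le_card])
  refine le_of_mul_le_mul_left ?_ hq0
  calc q * ((weightedEnergy r - M ^ 4 / p) * q) = #G * (weightedEnergy r - M ^ 4 / p) := by
        rw [← Real.mul_self_sqrt (Nat.cast_nonneg #G)]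
        ring
    _ ≤ p * e ^ 2 := henergy
    _ = e * p * e := by ring
    _ ≤ M ^ 2 * q * e := by gcongr
    _ = q * (M ^ 2 * e) := by ring

lemma weightedEnergy_lowPart_mul_sqrt_le (hG : IsMulSubgroup G) (hr0 : ∀ x, 0 ≤ r x)
    (hr : ∀ g ∈ G, ∀ x, r (g * x) = r x) (hM : ∑ x, r x = M)
    (hle : M ^ 2 * √(#G : ℝ) ≤ (∑ x, r x ^ 2 - M ^ 2 / p) * p) :
    weightedEnergy (lowPart r (M * √(#G : ℝ) / p)) * √(#G : ℝ) ≤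
      2 * M ^ 2 * (∑ x, r x ^ 2 - M ^ 2 / p) := by
  have hM0 : 0 ≤ M := hM ▸ sum_nonneg fun x _ => hr0 x
  have hp : (0 : ℝ) < p := mod_cast (Fact.out : p.Prime).pos
  have hG0 : (0 : ℝ) < #G := by linarith [hG.one_le_card]
  have henergy := card_mul_weightedEnergy_lowPart_le hG.zero_notMem hr0 hr hM
    (D := M * √(#G : ℝ) / p) (by positivity)
  have hlow : weightedEnergy (lowPart r (M * √(#G : ℝ) / p)) ≤ 2 * (M ^ 4 / p) := by
    refine le_of_mul_le_mul_left (henergy.trans_eq ?_) hG0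
    rw [ZMod.card, mul_pow, div_pow, mul_pow, Real.sq_sqrt hG0.le]
    field_simp
    ring
  calc weightedEnergy (lowPart r (M * √(#G : ℝ) / p)) * √(#G : ℝ)
      ≤ 2 * (M ^ 4 / p) * √(#G : ℝ) := by gcongr
    _ = 2 * M ^ 2 * (M ^ 2 * √(#G : ℝ) / p) := by ring
    _ ≤ 2 * M ^ 2 * (∑ x, r x ^ 2 - M ^ 2 / p) := by
        gcongr
        rwa [div_le_iff₀ hp]

lemma weightedEnergy_dyadicPart_le (hG : IsMulSubgroup G) (hr0 : ∀ x, 0 ≤ r x)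
    (hr : ∀ g ∈ G, ∀ x, r (g * x) = r x) (hM0 : 0 < M) (hM : ∑ x, r x = M)
    (hmax : ∀ x, r x * #G ≤ M)
    (hle : M ^ 2 * √(#G : ℝ) ≤ (∑ x, r x ^ 2 - M ^ 2 / p) * p) (i : ℕ) :
    weightedEnergy (dyadicPart r (M * √(#G : ℝ) / p) i) ≤
      320000 * M ^ 2 * (∑ x, r x ^ 2 - M ^ 2 / p) / √(#G : ℝ) := by
  have hp : (0 : ℝ) < p := mod_cast (Fact.out : p.Prime).pos
  have hq1 : 1 ≤ √(#G : ℝ) := Real.one_le_sqrt.2 hG.one_le_card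
  have hmean : M ^ 2 / p ≤ ∑ x, r x ^ 2 - M ^ 2 / p := by
    rw [div_le_iff₀ hp]
    exact (le_mul_of_one_le_right (sq_nonneg M) hq1).trans hle
  have hvar : 0 ≤ ∑ x, r x ^ 2 - M ^ 2 / p := le_trans (by positivity) hmean
  rw [le_div_iff₀ (by linarith)]
  cases i with
  | zero =>
    refine (weightedEnergy_lowPart_mul_sqrt_le hG hr0 hr hM hle).trans ?_
    gcongr
    norm_num
  | succ i =>
    have hthreshold : M * √(#G : ℝ) ≤ 2 ^ i * (M * √(#G : ℝ) / p) * p := by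
      rw [mul_assoc, div_mul_cancel₀ _ hp.ne']
      exact le_mul_of_one_le_left (by positivity) (one_le_pow₀ one_le_two)
    calc weightedEnergy (dyadicLevel r (2 ^ i * (M * √(#G : ℝ) / p))) * √(#G : ℝ)
        ≤ 160000 * M ^ 2 * ∑ x, r x ^ 2 :=
          weightedEnergy_dyadicLevel_mul_sqrt_le hG hr0 hr hM hmax (by positivity) hthreshold
      _ ≤ 160000 * M ^ 2 * (2 * (∑ x, r x ^ 2 - M ^ 2 / p)) := by
          gcongr
          linarith
      _ = 320000 * M ^ 2 * (∑ x, r x ^ 2 - M ^ 2 / p) := by ring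

lemma lowPart_two_pow_log_eq_self (hG : IsMulSubgroup G) (hr0 : ∀ x, 0 ≤ r x) (hM0 : 0 < M)
    (hmax : ∀ x, r x * #G ≤ M) (x : ZMod p) :
    lowPart r (2 ^ (Nat.log 2 p + 1) * (M * √(#G : ℝ) / p)) x = r x := by
  have hp : (0 : ℝ) < p := mod_cast (Fact.out : p.Prime).pos
  have hq1 : 1 ≤ √(#G : ℝ) := Real.one_le_sqrt.2 hG.one_le_card
  have hlog : (p : ℝ) < 2 ^ (Nat.log 2 p + 1) := mod_cast Nat.lt_pow_succ_log_self one_lt_two p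
  refine if_pos ?_
  calc r x ≤ r x * #G := le_mul_of_one_le_right (hr0 x) hG.one_le_card
    _ ≤ M * √(#G : ℝ) := (hmax x).trans (le_mul_of_one_le_right hM0.le hq1)
    _ = p * (M * √(#G : ℝ) / p) := by rw [mul_div_cancel₀ _ hp.ne']
    _ < 2 ^ (Nat.log 2 p + 1) * (M * √(#G : ℝ) / p) := by gcongr

lemma weightedEnergy_mul_sqrt_le_of_le (hG : IsMulSubgroup G) (hr0 : ∀ x, 0 ≤ r x)
    (hr : ∀ g ∈ G, ∀ x, r (g * x) = r x) (hM0 : 0 < M) (hM : ∑ x, r x = M)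
    (hmax : ∀ x, r x * #G ≤ M)
    (hle : M ^ 2 * √(#G : ℝ) ≤ (∑ x, r x ^ 2 - M ^ 2 / p) * p) :
    weightedEnergy r * √(#G : ℝ) ≤
      (Nat.log 2 p + 2) ^ 4 * (320000 * M ^ 2 * (∑ x, r x ^ 2 - M ^ 2 / p)) := by
  have hq0 : 0 < √(#G : ℝ) := Real.sqrt_pos.2 (by linarith [hG.one_le_card])
  have hdecomp : (fun x => ∑ i ∈ range (Nat.log 2 p + 1 + 1),
      dyadicPart r (M * √(#G : ℝ) / p) i x) = r := by
    funext x
    rw [sum_dyadicPart (by positivity), lowPart_two_pow_log_eq_self hG hr0 hM0 hmax]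
  have henergy := weightedEnergy_sum_le (I := range (Nat.log 2 p + 1 + 1)) fun i _ =>
    weightedEnergy_dyadicPart_le hG hr0 hr hM0 hM hmax hle i
  rw [hdecomp, card_range, mul_div_assoc', le_div_iff₀ hq0] at henergy
  refine henergy.trans_eq ?_
  push_cast
  ring

theorem weightedEnergy_sub_mul_sqrt_le (hG : IsMulSubgroup G) (hr0 : ∀ x, 0 ≤ r x)
    (hr : ∀ g ∈ G, ∀ x, r (g * x) = r x) (hM0 : 0 < M) (hM : ∑ x, r x = M)
    (hmax : ∀ x, r x * #G ≤ M) :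
    (weightedEnergy r - M ^ 4 / p) * √(#G : ℝ) ≤
      25920000 * Real.logb 2 p ^ 4 * M ^ 2 * (∑ x, r x ^ 2 - M ^ 2 / p) := by
  have hlog : (Nat.log 2 p : ℝ) ≤ Real.logb 2 p := Real.natLog_le_logb p 2
  have hlog1 : 1 ≤ (Nat.log 2 p : ℝ) := mod_cast Nat.log_pos one_lt_two (Fact.out : p.Prime).two_le
  have hvar := sum_sq_sub_sq_sum_div_card_nonneg r
  rw [hM, ZMod.card] at hvar
  rcases le_total ((∑ x, r x ^ 2 - M ^ 2 / p) * p) (M ^ 2 * √(#G : ℝ)) with hle | hle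
  · refine (weightedEnergy_sub_mul_sqrt_le_of_le hG hr hM hle).trans ?_
    rw [mul_assoc _ (M ^ 2)]
    have hlog4 : 1 ≤ Real.logb 2 p ^ 4 := one_le_pow₀ (hlog1.trans hlog)
    exact le_mul_of_one_le_left (by positivity) (by linarith)
  · calc (weightedEnergy r - M ^ 4 / p) * √(#G : ℝ) ≤ weightedEnergy r * √(#G : ℝ) := by
          gcongr
          exact sub_le_self _ (by positivity)
      _ ≤ (Nat.log 2 p + 2) ^ 4 * (320000 * M ^ 2 * (∑ x, r x ^ 2 - M ^ 2 / p)) :=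
          weightedEnergy_mul_sqrt_le_of_le hG hr0 hr hM0 hM hmax hle
      _ ≤ (3 * Real.logb 2 p) ^ 4 * (320000 * M ^ 2 * (∑ x, r x ^ 2 - M ^ 2 / p)) := by
          gcongr
          linarith
      _ = 25920000 * Real.logb 2 p ^ 4 * M ^ 2 * (∑ x, r x ^ 2 - M ^ 2 / p) := by ring

end EnergyIncrement

section SumRepresentations

variable {X : Type*} [AddCommGroup X] [DecidableEq X] (G : Finset X)

/-- The number of representations of `x` as an ordered sum of `n` elements of `G`, as a real
number. -/
def sumRepr (n : ℕ) (x : X) : ℝ := #{a ∈ Fintype.piFinset fun _ : Fin n => G | ∑ i, a i = x}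

lemma sumRepr_nonneg (n : ℕ) (x : X) : 0 ≤ sumRepr G n x := Nat.cast_nonneg _

lemma sumRepr_succ_le (n : ℕ) (x : X) : sumRepr G (n + 1) x ≤ (#G : ℝ) ^ n := by
  rw [sumRepr, ← Nat.cast_pow, Nat.cast_le, ← Fintype.card_piFinset_const]
  refine card_le_card_of_injOn Fin.tail (fun a ha => ?_) fun a ha b hb hab => ?_
  · rw [mem_coe, mem_filter, Fintype.mem_piFinset] at ha
    exact Fintype.mem_piFinset.2 fun i => ha.1 i.succ
  · have hzero : a 0 = b 0 := by
      have hsum := (mem_filter.1 ha).2.trans (mem_filter.1 hb).2.symm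
      have htail : ∑ i : Fin n, a i.succ = ∑ i : Fin n, b i.succ :=
        sum_congr rfl fun i _ => congrFun hab i
      rw [Fin.sum_univ_succ, Fin.sum_univ_succ, htail] at hsum
      exact add_right_cancel hsum
    rw [← Fin.cons_self_tail a, ← Fin.cons_self_tail b, hab, hzero]

variable [Fintype X]

lemma sum_sumRepr (n : ℕ) : ∑ x, sumRepr G n x = (#G : ℝ) ^ n := by
  rw [← Nat.cast_pow, ← Fintype.card_piFinset_const, card_eq_sum_card_fiberwise
    (f := fun a => ∑ i, a i) (t := univ) fun _ _ => mem_univ _, Nat.cast_sum]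
  rfl

lemma sumRepr_add (m n : ℕ) : sumRepr G (m + n) = addConv (sumRepr G m) (sumRepr G n) := by
  funext t
  have hsplit : #{c ∈ Fintype.piFinset fun _ : Fin (m + n) => G | ∑ i, c i = t} =
      #{ab ∈ (Fintype.piFinset fun _ : Fin m => G) ×ˢ (Fintype.piFinset fun _ : Fin n => G) |
        ∑ i, ab.1 i + ∑ i, ab.2 i = t} :=
    card_equiv (Fin.appendEquiv m n).symm fun c => by
      simp [Fin.appendEquiv, Fin.sum_univ_add, Fin.forall_fin_add]
  rw [sumRepr, hsplit, card_eq_sum_card_fiberwise (f := fun ab => ∑ i, ab.1 i) (t := univ)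
    fun _ _ => mem_univ _, Nat.cast_sum, addConv]
  refine sum_congr rfl fun x _ => ?_
  rw [sumRepr, sumRepr, ← Nat.cast_mul, ← card_product]
  congr 2
  ext ab
  simp only [mem_filter, mem_product, eq_sub_iff_add_eq']
  grind

lemma weightedEnergy_sumRepr (n : ℕ) :
    weightedEnergy (sumRepr G n) = ∑ x, sumRepr G (n + n) x ^ 2 := by
  rw [sumRepr_add, weightedEnergy]

end SumRepresentations

lemma IsMulSubgroup.sumRepr_mul_left {F : Type*} [Field F] [DecidableEq F] {G : Finset F}
    (hG : IsMulSubgroup G) (n : ℕ) {g : F} (hg : g ∈ G) (x : F) :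
    sumRepr G n (g * x) = sumRepr G n x := by
  have hne : ∀ g ∈ G, g ≠ 0 := fun g hg h0 => hG.zero_notMem (h0 ▸ hg)
  have hle : ∀ g ∈ G, ∀ x, sumRepr G n x ≤ sumRepr G n (g * x) := fun g hg x => by
    refine Nat.cast_le.2 (card_le_card_of_injOn (fun a i => g * a i) (fun a ha => ?_)
      fun a _ b _ hab => funext fun i => mul_left_cancel₀ (hne g hg) (congrFun hab i))
    simp only [mem_coe, mem_filter, Fintype.mem_piFinset] at ha ⊢
    exact ⟨fun i => hG.mul_mem _ hg _ (ha.1 i), by rw [← mul_sum, ha.2]⟩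
  refine le_antisymm ?_ (hle g hg x)
  simpa only [inv_mul_cancel_left₀ (hne g hg)] using hle g⁻¹ (hG.inv_mem g hg) (g * x)

section HigherEnergies

variable {p : ℕ} [Fact p.Prime] (G : Finset (ZMod p))

lemma Tplus_eq_sum_sumRepr_sq (n : ℕ) : (Tplus p n G : ℝ) = ∑ x, sumRepr G n x ^ 2 := by
  rw [Tplus, card_eq_sum_card_fiberwise (f := fun a => ∑ i, a.1 i) (t := univ)
    fun _ _ => mem_univ _, Nat.cast_sum]
  refine sum_congr rfl fun x _ => ?_
  rw [sumRepr, ← Nat.cast_pow, sq, ← card_product]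
  congr 2
  ext a
  simp only [mem_filter, mem_product]
  grind

lemma Tplus_sub_card_pow_div_nonneg (n : ℕ) : 0 ≤ (Tplus p n G : ℝ) - (#G : ℝ) ^ (2 * n) / p := by
  have hvar := sum_sq_sub_sq_sum_div_card_nonneg (sumRepr G n)
  rwa [sum_sumRepr, ← Tplus_eq_sum_sumRepr_sq, ZMod.card, ← pow_mul, mul_comm n] at hvar

variable {G}

lemma Tplus_two_mul_sub_mul_sqrt_le (hG : IsMulSubgroup G) {n : ℕ} (hn : n ≠ 0) :
    ((Tplus p (2 * n) G : ℝ) - (#G : ℝ) ^ (4 * n) / p) * √(#G : ℝ) ≤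
      25920000 * Real.logb 2 p ^ 4 * (#G : ℝ) ^ (2 * n) *
        ((Tplus p n G : ℝ) - (#G : ℝ) ^ (2 * n) / p) := by
  obtain ⟨m, rfl⟩ := Nat.exists_eq_succ_of_ne_zero hn
  have hmax (x : ZMod p) : sumRepr G (m + 1) x * #G ≤ (#G : ℝ) ^ (m + 1) := by
    rw [pow_succ]
    exact mul_le_mul_of_nonneg_right (sumRepr_succ_le G m x) (Nat.cast_nonneg _)
  have hstep := weightedEnergy_sub_mul_sqrt_le hG (sumRepr_nonneg G (m + 1))
    (fun g hg x => hG.sumRepr_mul_left (m + 1) hg x)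
    (pow_pos (by linarith [hG.one_le_card]) _) (sum_sumRepr G (m + 1)) hmax
  rwa [weightedEnergy_sumRepr, ← Tplus_eq_sum_sumRepr_sq, ← Tplus_eq_sum_sumRepr_sq, ← two_mul,
    ← pow_mul, ← pow_mul, mul_comm _ 4, mul_comm _ 2] at hstep

theorem Tplus_two_pow_sub_le (hG : IsMulSubgroup G) {k : ℕ} (hk : 1 ≤ k) :
    (Tplus p (2 ^ k) G : ℝ) - (#G : ℝ) ^ (2 ^ (k + 1)) / p ≤
      (25920000 * Real.logb 2 p ^ 4) ^ (k - 1) *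
        (#G : ℝ) ^ ((2 : ℝ) ^ (k + 1) - ((k : ℝ) + 7) / 2) * Tplus p 2 G := by
  have hG0 : (0 : ℝ) < #G := by linarith [hG.one_le_card]
  induction k, hk using Nat.le_induction with
  | base =>
    have hexp : (2 : ℝ) ^ (1 + 1) - (((1 : ℕ) : ℝ) + 7) / 2 = 0 := by norm_num
    rw [hexp, Real.rpow_zero, Nat.sub_self, pow_zero, pow_one, one_mul, one_mul]
    exact sub_le_self _ (by positivity)
  | succ k hk ih =>
    have hexp : (#G : ℝ) ^ (2 ^ (k + 1)) *
        (#G : ℝ) ^ ((2 : ℝ) ^ (k + 1) - ((k : ℝ) + 7) / 2) =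
          (#G : ℝ) ^ ((2 : ℝ) ^ (k + 1 + 1) - (((k + 1 : ℕ) : ℝ) + 7) / 2) * √(#G : ℝ) := by
      rw [Real.sqrt_eq_rpow, ← Real.rpow_natCast, ← Real.rpow_add hG0, ← Real.rpow_add hG0]
      congr 1
      push_cast
      ring
    have hstep := Tplus_two_mul_sub_mul_sqrt_le hG (pow_ne_zero k two_ne_zero)
    rw [show 4 * 2 ^ k = 2 ^ (k + 1 + 1) by ring, ← pow_succ'] at hstep
    set c := 25920000 * Real.logb 2 p ^ 4
    refine le_of_mul_le_mul_right (hstep.trans ?_) (Real.sqrt_pos.2 hG0)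
    calc c * (#G : ℝ) ^ (2 ^ (k + 1)) *
          ((Tplus p (2 ^ k) G : ℝ) - (#G : ℝ) ^ (2 ^ (k + 1)) / p)
        ≤ c * (#G : ℝ) ^ (2 ^ (k + 1)) * (c ^ (k - 1) *
          (#G : ℝ) ^ ((2 : ℝ) ^ (k + 1) - ((k : ℝ) + 7) / 2) * Tplus p 2 G) := by gcongr
      _ = c ^ (k + 1 - 1) * (#G : ℝ) ^ ((2 : ℝ) ^ (k + 1 + 1) - (((k + 1 : ℕ) : ℝ) + 7) / 2) *
          Tplus p 2 G * √(#G : ℝ) := by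
        rw [Nat.add_sub_cancel, ← mul_pow_sub_one (by lia : k ≠ 0)]
        linear_combination (c * c ^ (k - 1) * Tplus p 2 G) * hexp

end HigherEnergies

end

theorem stmt0 :
    ∃ C : ℝ, 0 < C ∧
      ∀ (p : ℕ), p.Prime → Odd p →
        ∀ (G : Finset (ZMod p)) (H : Subgroup (ZMod p)ˣ),
          (G : Set (ZMod p)) = (fun u : (ZMod p)ˣ => (u : ZMod p)) '' (H : Set (ZMod p)ˣ) →
          ∀ k : ℕ, 1 ≤ k →
            0 ≤ (Tplus p (2 ^ k) G : ℝ) - (G.card : ℝ) ^ (2 ^ (k + 1)) / p ∧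
            (Tplus p (2 ^ k) G : ℝ) - (G.card : ℝ) ^ (2 ^ (k + 1)) / p ≤
              (2 : ℝ) ^ (3 * k ^ 2) * (C * (Real.logb 2 p) ^ 4) ^ (k - 1) *
                (G.card : ℝ) ^ ((2 : ℝ) ^ (k + 1) - ((k : ℝ) + 7) / 2) *
                  (Tplus p 2 G : ℝ) := by
  refine ⟨25920000, by norm_num, fun p hp _ G H hGH k hk => ?_⟩
  have : Fact p.Prime := ⟨hp⟩
  have hnonneg := Tplus_sub_card_pow_div_nonneg G (2 ^ k)
  rw [← pow_succ'] at hnonneg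
  refine ⟨hnonneg, (Tplus_two_pow_sub_le (isMulSubgroup_of_coe_eq_image hGH) hk).trans ?_⟩
  rw [mul_assoc (2 ^ _), mul_assoc (2 ^ _)]
  exact le_mul_of_one_le_left (by positivity) (one_le_pow₀ one_le_two)
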